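/- Let P be a finite set of n points in the plane in general position (no three points of P are collinear) that is colored with k distinct colors, i.e., partitioned into k nonempty color classes. Then P admits a perfect rainbow polygon of size at most ⌈7k/5⌉ + 6. In particular, ρ(k) ≤ ⌈7k/5⌉ + 6, where ρ(k) is the minimum number such that every k-colored point set in the plane in general position admits a perfect rainbow polygon of size ρ(k). -/

import Mathlib

/-!
Choose one point of each colour, giving a set `S` of `k` points. After a linear change of
coordinates the points of `P` have abscissas at least one apart and lie extremely close to the
horizontal axis. A comb-like polygon is then built from right to left: it starts as a trapezoid to
the right of `P` and is extended by attaching triangles to edges, so that its boundary passes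
through the points of `S` treated so far while its closed region contains no other point of `P`.

Attaching a triangle to an edge which is its only contact with the closed region replaces this edge
by two, adding one vertex, and keeps the polygon simple; the region grows by at most the triangle
(`insert_vertex`). The latter holds because the complement of the union of the old region and the
triangle is still connected and unbounded (`isPreconnected_compl_union_triangle`), so that the
Jordan curve theorem is not needed.

Below and above `P`, the polygon keeps an edge along which it can be extended further to the left.
One point of `S` costs two vertices (`Sweep.single`): a triangle far below `P` reaches the abscissa
of the point, and from there a spike goes up to the point. Three points of `S` cost only four
vertices (`Sweep.triple`): up to reflection, the leftmost point `p₁` lies below the line `ℓ` through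
the other two, so that a vertical spike from below passes through `p₁` on its way to `ℓ` and then
turns along `ℓ` through the second point to the third. The spike can be taken so thin that it
catches no further point of `P`, because no three points are collinear.

Hence `4 + 4 ⌊k / 3⌋ + 2 (k mod 3)` vertices are enough (`Sweep.run`), and this is at most
`⌈7 k / 5⌉ + 6`.
-/

/-- The `i`-th edge of the closed polygonal cycle with vertex sequence `w`. -/
def cycleEdge {m : ℕ} (w : Fin (m + 1) → ℝ × ℝ) (i : Fin (m + 1)) : Set (ℝ × ℝ) :=
  segment ℝ (w i) (w (i + 1))

/-- A polygonal cycle is noncrossing if its edges pairwise intersect only in shared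
cycle vertices: two consecutive edges meet exactly at their common endpoint, and two
nonconsecutive edges are disjoint. -/
def IsNoncrossingCycle {m : ℕ} (w : Fin (m + 1) → ℝ × ℝ) : Prop :=
  (∀ i : Fin (m + 1), cycleEdge w i ∩ cycleEdge w (i + 1) = {w (i + 1)}) ∧
  (∀ i j : Fin (m + 1), i ≠ j → j ≠ i + 1 → i ≠ j + 1 →
      cycleEdge w i ∩ cycleEdge w j = ∅)

/-- A simple polygon with vertex sequence `w` (of size `m + 1`). -/
def IsSimplePolygon {m : ℕ} (w : Fin (m + 1) → ℝ × ℝ) : Prop :=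
  3 ≤ m + 1 ∧ Function.Injective w ∧ IsNoncrossingCycle w

/-- The boundary of the polygon with vertex sequence `w`: the union of its edges. -/
def polyBoundary {m : ℕ} (w : Fin (m + 1) → ℝ × ℝ) : Set (ℝ × ℝ) :=
  ⋃ i : Fin (m + 1), cycleEdge w i

/-- The interior of the polygon with vertex sequence `w`: the union of the bounded
connected components of the complement of its boundary. -/
def polyInterior {m : ℕ} (w : Fin (m + 1) → ℝ × ℝ) : Set (ℝ × ℝ) :=
  {x | x ∉ polyBoundary w ∧
    Bornology.IsBounded (connectedComponentIn (polyBoundary w)ᶜ x)}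

/-- The closed region of the polygon with vertex sequence `w`: the union of the
polygonal curve and its interior. -/
def polyRegion {m : ℕ} (w : Fin (m + 1) → ℝ × ℝ) : Set (ℝ × ℝ) :=
  polyBoundary w ∪ polyInterior w

/-! ### Topology of the closed region -/

lemma polyBoundary_isCompact {m : ℕ} (w : Fin (m + 1) → ℝ × ℝ) : IsCompact (polyBoundary w) := by
  unfold polyBoundary cycleEdge
  refine isCompact_iUnion fun i => ?_
  rw [← convexHull_pair (𝕜 := ℝ)]
  exact Set.Finite.isCompact_convexHull ℝ (Set.toFinite _)

lemma vertex_mem_polyBoundary {m : ℕ} (w : Fin (m + 1) → ℝ × ℝ) (i : Fin (m + 1)) :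
    w i ∈ polyBoundary w :=
  Set.mem_iUnion.2 ⟨i, left_mem_segment ℝ _ _⟩

/-- The complement of a square is connected, being a cyclic chain of open half-planes. -/
lemma isPreconnected_compl_box (R : ℝ) :
    IsPreconnected {p : ℝ × ℝ | R < p.1 ∨ R < p.2 ∨ p.1 < -R ∨ p.2 < -R} := by
  have l1 : IsLinearMap ℝ (fun p : ℝ × ℝ => p.1) := (LinearMap.fst ℝ ℝ ℝ).isLinear
  have l2 : IsLinearMap ℝ (fun p : ℝ × ℝ => p.2) := (LinearMap.snd ℝ ℝ ℝ).isLinear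
  have h1 := (convex_halfSpace_gt l1 R).isPreconnected
  have h2 := (convex_halfSpace_gt l2 R).isPreconnected
  have h3 := (convex_halfSpace_lt l1 (-R)).isPreconnected
  have h4 := (convex_halfSpace_lt l2 (-R)).isPreconnected
  have e : {p : ℝ × ℝ | R < p.1 ∨ R < p.2 ∨ p.1 < -R ∨ p.2 < -R} =
      (({p | R < p.1} ∪ {p | R < p.2}) ∪ {p | p.1 < -R}) ∪ {p | p.2 < -R} := by
    ext p; simp [or_assoc]
  rw [e]
  refine IsPreconnected.union (R + 1, -R - 1) ?_ ?_ (IsPreconnected.union (-R - 1, R + 1) ?_ ?_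
    (IsPreconnected.union (R + 1, R + 1) ?_ ?_ h1 h2) h3) h4 <;> simp

lemma not_mem_polyRegion_of_unbounded {m : ℕ} {w : Fin (m + 1) → ℝ × ℝ} {C : Set (ℝ × ℝ)}
    (hC : IsPreconnected C) (hub : ¬ Bornology.IsBounded C) (hd : C ⊆ (polyBoundary w)ᶜ)
    {x : ℝ × ℝ} (hx : x ∈ C) : x ∉ polyRegion w := by
  rintro (h | h)
  · exact hd hx h
  · exact hub (h.2.subset (hC.subset_connectedComponentIn hx hd))

/-- A bounded set lies in a square centred at the origin. -/
lemma exists_box {K : Set (ℝ × ℝ)} (hK : Bornology.IsBounded K) :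
    ∃ R : ℝ, 0 < R ∧ ∀ p ∈ K, -R ≤ p.1 ∧ p.1 ≤ R ∧ -R ≤ p.2 ∧ p.2 ≤ R := by
  obtain ⟨R, hR, h⟩ := hK.exists_pos_norm_le
  refine ⟨R, hR, fun p hp => ?_⟩
  have := h p hp
  have h1 := (norm_fst_le p).trans this
  have h2 := (norm_snd_le p).trans this
  rw [Real.norm_eq_abs, abs_le] at h1 h2
  exact ⟨h1.1, h1.2, h2.1, h2.2⟩

lemma not_isBounded_of_forall {C : Set (ℝ × ℝ)}
    (h : ∀ R : ℝ, ∃ p ∈ C, R < p.1 ∨ R < p.2 ∨ p.1 < -R ∨ p.2 < -R) :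
    ¬ Bornology.IsBounded C := by
  intro hb
  obtain ⟨R, -, hR⟩ := exists_box hb
  obtain ⟨p, hp, h⟩ := h R
  have := hR p hp
  grind

lemma not_isBounded_compl {K : Set (ℝ × ℝ)} (hK : Bornology.IsBounded K) :
    ¬ Bornology.IsBounded Kᶜ := by
  obtain ⟨R, hR, h⟩ := exists_box hK
  refine not_isBounded_of_forall fun r => ⟨(R + |r| + 1, 0), fun hp => ?_, Or.inl ?_⟩
  · have := (h _ hp).2.1
    simp only at this
    linarith [abs_nonneg r]
  · simp only
    linarith [le_abs_self r]

/-- The part of the plane outside the closed region is the unbounded component of the complement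
of the boundary; hence it is open and connected, and the region is bounded. -/
lemma polyRegion_compl {m : ℕ} (w : Fin (m + 1) → ℝ × ℝ) :
    Bornology.IsBounded (polyRegion w) ∧ IsOpen (polyRegion w)ᶜ ∧
      IsPreconnected (polyRegion w)ᶜ := by
  obtain ⟨R, hR, hb⟩ := exists_box (polyBoundary_isCompact w).isBounded
  set E := {p : ℝ × ℝ | R < p.1 ∨ R < p.2 ∨ p.1 < -R ∨ p.2 < -R} with hE
  have hEc : IsPreconnected E := isPreconnected_compl_box R
  have hEd : E ⊆ (polyBoundary w)ᶜ := by
    intro p hp hpb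
    have := hb p hpb
    simp only [hE, Set.mem_ofPred_eq] at hp
    grind
  have hEu : ¬ Bornology.IsBounded E := by
    refine not_isBounded_of_forall fun r => ⟨(R + |r| + 1, 0), Or.inl ?_, Or.inl ?_⟩
    · simp only
      linarith [abs_nonneg r]
    · simp only
      linarith [le_abs_self r]
  have hbox : Bornology.IsBounded Eᶜ := by
    refine (Metric.isBounded_closedBall (x := (0 : ℝ × ℝ)) (r := R)).subset fun p hp => ?_
    simp only [hE, Set.mem_compl_iff, Set.mem_ofPred_eq, not_or, not_lt] at hp
    rw [mem_closedBall_zero_iff, Prod.norm_def]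
    exact max_le (abs_le.2 ⟨hp.2.2.1, hp.1⟩) (abs_le.2 ⟨hp.2.2.2, hp.2.1⟩)
  have hx0 : ((R + 1, 0) : ℝ × ℝ) ∈ E := Or.inl (by simp)
  have key : (polyRegion w)ᶜ = connectedComponentIn (polyBoundary w)ᶜ (R + 1, 0) := by
    ext x
    constructor
    · intro hx
      have hxb : x ∉ polyBoundary w := fun h => hx (Or.inl h)
      have hxu : ¬ Bornology.IsBounded (connectedComponentIn (polyBoundary w)ᶜ x) :=
        fun h => hx (Or.inr ⟨hxb, h⟩)
      obtain ⟨y, hy, hyE⟩ : ∃ y ∈ connectedComponentIn (polyBoundary w)ᶜ x, y ∈ E := by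
        by_contra! hcon
        exact hxu (hbox.subset hcon)
      have h0 := hEc.subset_connectedComponentIn hyE hEd hx0
      rw [← connectedComponentIn_eq hy] at h0
      rw [← connectedComponentIn_eq h0]
      exact mem_connectedComponentIn hxb
    · intro hx
      have hxb : x ∉ polyBoundary w := connectedComponentIn_subset _ _ hx
      rintro (h | h)
      · exact hxb h
      · rw [polyInterior, Set.mem_ofPred_eq, ← connectedComponentIn_eq hx] at h
        exact hEu (h.2.subset (hEc.subset_connectedComponentIn hx0 hEd))
  refine ⟨hbox.subset fun p hp hpE => ?_, ?_, ?_⟩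
  · exact not_mem_polyRegion_of_unbounded hEc hEu hEd hpE hp
  · rw [key]
    exact (polyBoundary_isCompact w).isClosed.isOpen_compl.connectedComponentIn
  · rw [key]
    exact isPreconnected_connectedComponentIn

/-- A connected set avoiding the boundary lies outside the region as soon as one of its points
does. -/
lemma disjoint_polyRegion_of_preconnected {m : ℕ} {w : Fin (m + 1) → ℝ × ℝ} {C : Set (ℝ × ℝ)}
    (hC : IsPreconnected C) (hd : C ⊆ (polyBoundary w)ᶜ) {x y : ℝ × ℝ} (hx : x ∈ C)
    (hxr : x ∉ polyRegion w) (hy : y ∈ C) : y ∉ polyRegion w := by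
  rintro (h | h)
  · exact hd hy h
  · refine hxr (Or.inr ⟨hd hx, ?_⟩)
    rw [← connectedComponentIn_eq (hC.subset_connectedComponentIn hy hd hx)]
    exact h.2

/-- Removing a closed set `T` from a connected open set `U` leaves it connected, provided `T ∩ U`
has an open neighbourhood `N` in `U` with `N \ T` connected and nonempty. -/
lemma isPreconnected_diff_of_nhd {U N T : Set (ℝ × ℝ)} (hU : IsOpen U) (hUc : IsPreconnected U)
    (hN : IsOpen N) (hNU : N ⊆ U) (hT : IsClosed T) (hTN : U ∩ T ⊆ N)
    (hNT : IsPreconnected (N \ T)) (hne : (N \ T).Nonempty) : IsPreconnected (U \ T) := by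
  -- A separation of `U \ T` has one side containing `N \ T`; adding `N` to it separates `U`.
  have main : ∀ u v : Set (ℝ × ℝ), IsOpen u → IsOpen v → U \ T ⊆ u ∪ v →
      (U \ T) ∩ (u ∩ v) = ∅ → N \ T ⊆ u → U \ T ⊆ u := by
    intro u v hu hv huv hdis hNu
    have hsub : U ⊆ ((u \ T) ∪ N) ∪ ((v ∩ U) \ T) := by
      intro p hp
      by_cases hpT : p ∈ T
      · exact Or.inl (Or.inr (hTN ⟨hp, hpT⟩))
      · rcases huv ⟨hp, hpT⟩ with h | h
        · exact Or.inl (Or.inl ⟨h, hpT⟩)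
        · exact Or.inr ⟨⟨h, hp⟩, hpT⟩
    have hd2 : U ∩ (((u \ T) ∪ N) ∩ ((v ∩ U) \ T)) = ∅ := by
      ext p
      simp only [Set.mem_inter_iff, Set.mem_union, Set.mem_sdiff, Set.mem_empty_iff_false,
        iff_false]
      rintro ⟨hpU, h1, ⟨hpv, -⟩, hpT⟩
      have hpu : p ∈ u := by
        rcases h1 with h | h
        · exact h.1
        · exact hNu ⟨h, hpT⟩
      have : p ∈ (U \ T) ∩ (u ∩ v) := ⟨⟨hpU, hpT⟩, hpu, hpv⟩
      rw [hdis] at this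
      exact this
    have o1 : IsOpen ((u \ T) ∪ N) := (hu.sdiff hT).union hN
    have o2 : IsOpen ((v ∩ U) \ T) := (hv.inter hU).sdiff hT
    rcases isPreconnected_iff_subset_of_disjoint.1 hUc _ _ o1 o2 hsub hd2 with h | h
    · intro p hp
      rcases h hp.1 with h | h
      · exact h.1
      · exact hNu ⟨h, hp.2⟩
    · obtain ⟨q, hq⟩ := hne
      have h1 := h (hNU hq.1)
      have : q ∈ (U \ T) ∩ (u ∩ v) := ⟨⟨hNU hq.1, hq.2⟩, hNu hq, h1.1.1⟩
      rw [hdis] at this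
      exact this.elim
  rw [isPreconnected_iff_subset_of_disjoint]
  intro u v hu hv huv hdis
  have hsub : N \ T ⊆ U \ T := Set.sdiff_subset_sdiff_left hNU
  have hdN : (N \ T) ∩ (u ∩ v) = ∅ :=
    Set.subset_empty_iff.1 (hdis ▸ Set.inter_subset_inter_left _ hsub)
  rcases isPreconnected_iff_subset_of_disjoint.1 hNT u v hu hv (hsub.trans huv) hdN with h | h
  · exact Or.inl (main u v hu hv huv hdis h)
  · exact Or.inr (main v u hv hu (by rwa [Set.union_comm]) (by rwa [Set.inter_comm v u]) h)

/-! ### Thin neighbourhoods of a triangle -/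

/-- If a segment, given in barycentric coordinates `(a, b, z)`, avoids the set `a, b ≥ 0 < z`, then
it avoids the slightly larger set `a, b > -δ z`, `z > 0` for some `δ > 0`. -/
lemma exists_delta_segment {a₀ a₁ b₀ b₁ z₀ z₁ : ℝ} (h₀ : a₀ + b₀ + z₀ = 1) (h₁ : a₁ + b₁ + z₁ = 1)
    (h : ∀ t ∈ Set.Icc (0 : ℝ) 1, 0 ≤ a₀ + t * (a₁ - a₀) → 0 ≤ b₀ + t * (b₁ - b₀) →
      z₀ + t * (z₁ - z₀) ≤ 0) :
    ∃ δ : ℝ, 0 < δ ∧ ∀ t ∈ Set.Icc (0 : ℝ) 1, 0 < z₀ + t * (z₁ - z₀) →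
      0 < a₀ + t * (a₁ - a₀) + δ * (z₀ + t * (z₁ - z₀)) →
      0 < b₀ + t * (b₁ - b₀) + δ * (z₀ + t * (z₁ - z₀)) → False := by
  set a : ℝ → ℝ := fun t => a₀ + t * (a₁ - a₀) with ha
  set b : ℝ → ℝ := fun t => b₀ + t * (b₁ - b₀) with hb
  set z : ℝ → ℝ := fun t => z₀ + t * (z₁ - z₀) with hz
  have hsum : ∀ t, a t + b t + z t = 1 := fun t => by
    simp only [ha, hb, hz]
    linear_combination (1 - t) * h₀ + t * h₁
  have ca : Continuous a := by fun_prop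
  have cb : Continuous b := by fun_prop
  have cz : Continuous z := by fun_prop
  change ∀ t ∈ Set.Icc (0 : ℝ) 1, 0 ≤ a t → 0 ≤ b t → z t ≤ 0 at h
  -- The case of an end of the base: two coordinates vanish together and are proportional.
  have corner : ∀ (f : ℝ → ℝ) (f₀ f₁ : ℝ), (f = fun t => f₀ + t * (f₁ - f₀)) → ∀ s, f s = 0 →
      z s = 0 → ∃ δ : ℝ, 0 < δ ∧ ∀ t, 0 < z t → f t < 0 → 0 < f t + δ * z t → False := by
    intro f f₀ f₁ hf s hfs hzs
    have e1 : ∀ t, f t = (t - s) * (f₁ - f₀) := fun t => by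
      have : f s = f₀ + s * (f₁ - f₀) := by rw [hf]
      rw [hf]
      simp only
      linarith
    have e2 : ∀ t, z t = (t - s) * (z₁ - z₀) := fun t => by
      simp only [hz] at hzs ⊢
      linarith
    by_cases hc : f₁ - f₀ = 0 ∨ z₁ - z₀ = 0
    · refine ⟨1, one_pos, fun t h1 h2 _ => ?_⟩
      rw [e2] at h1
      rw [e1] at h2
      rcases hc with hc | hc <;> simp [hc] at h1 h2
    · push Not at hc
      refine ⟨|f₁ - f₀| / |z₁ - z₀|, by have := abs_pos.2 hc.1; have := abs_pos.2 hc.2; positivity,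
        fun t h1 h2 h3 => ?_⟩
      have h4 : |f₁ - f₀| / |z₁ - z₀| * z t = |f t| := by
        rw [← abs_of_pos h1, e1, e2, abs_mul, abs_mul]
        have := abs_pos.2 hc.2
        field_simp
      rw [h4, abs_of_neg h2] at h3
      linarith
  have small : ∀ x y : ℝ, x < 0 → ∃ δ : ℝ, 0 < δ ∧ x + δ * y < 0 := by
    intro x y hx
    have hd : 0 < -x / (|y| + 1) := div_pos (by linarith) (by positivity)
    refine ⟨-x / (|y| + 1), hd, ?_⟩
    have h1 : -x / (|y| + 1) * y ≤ -x / (|y| + 1) * |y| :=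
      mul_le_mul_of_nonneg_left (le_abs_self y) hd.le
    have h2 : -x / (|y| + 1) * |y| < -x := by
      rw [div_mul_eq_mul_div, div_lt_iff₀ (by positivity)]
      nlinarith [abs_nonneg y]
    linarith
  refine isCompact_Icc.induction_on (s := Set.Icc (0 : ℝ) 1)
    (p := fun s => ∃ δ : ℝ, 0 < δ ∧ ∀ t ∈ s, 0 < z t → 0 < a t + δ * z t → 0 < b t + δ * z t → False)
    ⟨1, one_pos, by simp⟩ ?_ ?_ ?_
  · rintro s t hst ⟨δ, h1, h2⟩
    exact ⟨δ, h1, fun x hx => h2 x (hst hx)⟩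
  · rintro s t ⟨δ, h1, h2⟩ ⟨δ', h1', h2'⟩
    refine ⟨min δ δ', lt_min h1 h1', fun x hx hzx hax hbx => ?_⟩
    have m1 : min δ δ' * z x ≤ δ * z x := by gcongr; exact min_le_left _ _
    have m2 : min δ δ' * z x ≤ δ' * z x := by gcongr; exact min_le_right _ _
    rcases hx with hx | hx
    · exact h2 x hx hzx (by linarith) (by linarith)
    · exact h2' x hx hzx (by linarith) (by linarith)
  · intro s hs
    -- it suffices to find an eventual bound
    suffices H : ∃ δ : ℝ, 0 < δ ∧ ∀ᶠ t in nhdsWithin s (Set.Icc 0 1),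
        (0 < z t → 0 < a t + δ * z t → 0 < b t + δ * z t → False) by
      obtain ⟨δ, h1, h2⟩ := H
      exact ⟨_, h2, δ, h1, fun t ht => ht⟩
    have ev : ∀ f : ℝ → ℝ, Continuous f → f s < 0 →
        ∀ᶠ t in nhdsWithin s (Set.Icc 0 1), f t < 0 := fun f hf hfs =>
      Filter.Eventually.filter_mono nhdsWithin_le_nhds (hf.continuousAt.eventually_lt_const hfs)
    by_cases hza : z s < 0
    · refine ⟨1, one_pos, (ev z cz hza).mono fun t h1 h2 => by linarith⟩
    by_cases haa : a s < 0
    · obtain ⟨δ, h1, h2⟩ := small (a s) (z s) haa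
      exact ⟨δ, h1, (ev (fun t => a t + δ * z t) (by fun_prop) h2).mono
        fun t h1 _ h3 => by linarith⟩
    by_cases hbb : b s < 0
    · obtain ⟨δ, h1, h2⟩ := small (b s) (z s) hbb
      exact ⟨δ, h1, (ev (fun t => b t + δ * z t) (by fun_prop) h2).mono
        fun t h1 _ _ h3 => by linarith⟩
    push Not at hza haa hbb
    have hz0 : z s = 0 := le_antisymm (h s hs haa hbb) hza
    have hs1 := hsum s
    have hin : ∀ᶠ t in nhdsWithin s (Set.Icc (0 : ℝ) 1), t ∈ Set.Icc (0 : ℝ) 1 :=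
      self_mem_nhdsWithin
    rcases haa.eq_or_lt with ha0 | ha0
    · obtain ⟨δ, h1, h2⟩ := corner a a₀ a₁ ha s ha0.symm hz0
      refine ⟨δ, h1, ?_⟩
      filter_upwards [hin, ev (fun t => - b t) (by fun_prop) (by linarith)] with t ht hbt h3 h4 _
      refine h2 t h3 ?_ h4
      by_contra! h5
      linarith [h t ht h5 (by linarith)]
    rcases hbb.eq_or_lt with hb0 | hb0
    · obtain ⟨δ, h1, h2⟩ := corner b b₀ b₁ hb s hb0.symm hz0
      refine ⟨δ, h1, ?_⟩
      filter_upwards [hin, ev (fun t => - a t) (by fun_prop) (by linarith)] with t ht hbt h3 _ h4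
      refine h2 t h3 ?_ h4
      by_contra! h5
      linarith [h t ht (by linarith) h5]
    · refine ⟨1, one_pos, ?_⟩
      filter_upwards [hin, ev (fun t => - a t) (by fun_prop) (by linarith),
        ev (fun t => - b t) (by fun_prop) (by linarith)] with t ht hat hbt h3 _ _
      linarith [h t ht (by linarith) (by linarith)]

/-- Twice the signed area of the triangle `A B C`. -/
def cross (A B C : ℝ × ℝ) : ℝ := (B.1 - A.1) * (C.2 - A.2) - (B.2 - A.2) * (C.1 - A.1)

lemma cross_combo_left (B C x y : ℝ × ℝ) (t : ℝ) : cross (x + t • (y - x)) B C =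
    cross x B C + t * (cross y B C - cross x B C) := by
  simp only [cross, Prod.fst_add, Prod.snd_add, Prod.smul_fst, Prod.smul_snd, Prod.fst_sub,
    Prod.snd_sub, smul_eq_mul]
  ring

lemma cross_rotate (A B C : ℝ × ℝ) : cross A B C = cross B C A := by
  simp only [cross]; ring

lemma cross_swap (A B C : ℝ × ℝ) : cross A B C = - cross B A C := by
  simp only [cross]; ring

lemma cross_sum (A B Z p : ℝ × ℝ) : cross p B Z + cross A p Z + cross A B p = cross A B Z := by
  simp only [cross]; ring

/-- The complement of the closed region stays connected when a triangle `A B Z` is attached along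
the base `[A, B]`, provided all points of the triangle off the base lie outside the region. The
quotients of `cross` are barycentric coordinates. -/
lemma isPreconnected_compl_union_triangle {m : ℕ} {w : Fin (m + 1) → ℝ × ℝ} {A B Z : ℝ × ℝ}
    (hD : cross A B Z ≠ 0) (hAB : segment ℝ A B ⊆ polyRegion w)
    (hout : ∀ p : ℝ × ℝ, 0 ≤ cross p B Z / cross A B Z → 0 ≤ cross A p Z / cross A B Z →
      0 < cross A B p / cross A B Z → p ∉ polyRegion w) :
    IsPreconnected ((polyRegion w)ᶜ \ {p | 0 ≤ cross p B Z / cross A B Z ∧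
      0 ≤ cross A p Z / cross A B Z ∧ 0 ≤ cross A B p / cross A B Z}) := by
  set a : ℝ × ℝ → ℝ := fun p => cross p B Z / cross A B Z with ha
  set b : ℝ × ℝ → ℝ := fun p => cross A p Z / cross A B Z with hb
  set z : ℝ × ℝ → ℝ := fun p => cross A B p / cross A B Z with hz
  have ca : Continuous a := by unfold a cross; fun_prop
  have cb : Continuous b := by unfold b cross; fun_prop
  have cz : Continuous z := by unfold z cross; fun_prop
  have hsum : ∀ p, a p + b p + z p = 1 := fun p => by
    simp only [ha, hb, hz]
    rw [← add_div, ← add_div, cross_sum, div_self hD]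
  have aa : ∀ x y t, a (x + t • (y - x)) = a x + t * (a y - a x) := fun x y t => by
    simp only [ha, cross_combo_left]; ring
  have ab : ∀ x y t, b (x + t • (y - x)) = b x + t * (b y - b x) := fun x y t => by
    simp only [hb, cross_rotate A, cross_combo_left]; ring
  have az : ∀ x y t, z (x + t • (y - x)) = z x + t * (z y - z x) := fun x y t => by
    simp only [hz, ← cross_rotate _ A B, cross_combo_left]; ring
  have conv : ∀ f : ℝ × ℝ → ℝ, (∀ x y t, f (x + t • (y - x)) = f x + t * (f y - f x)) →
      Convex ℝ {p | 0 < f p} := by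
    intro f hf
    rw [convex_iff_forall_pos]
    intro x hx y hy s t hs ht hst
    have : s • x + t • y = x + t • (y - x) := by
      rw [← eq_sub_iff_add_eq] at hst
      subst hst
      module
    simp only [Set.mem_ofPred_eq] at hx hy ⊢
    rw [this, hf]
    have : f x + t * (f y - f x) = s * f x + t * f y := by
      rw [← eq_sub_iff_add_eq] at hst
      subst hst
      ring
    rw [this]
    positivity
  obtain ⟨δ, hδ, hδb⟩ : ∃ δ : ℝ, 0 < δ ∧ ∀ p, 0 < z p → 0 < a p + δ * z p → 0 < b p + δ * z p →
      p ∉ polyBoundary w := by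
    have hi : ∀ i : Fin (m + 1), ∃ δ : ℝ, 0 < δ ∧ ∀ p, 0 < z p → 0 < a p + δ * z p →
        0 < b p + δ * z p → p ∉ cycleEdge w i := by
      intro i
      have hpar : ∀ p, p ∈ cycleEdge w i ↔ ∃ t ∈ Set.Icc (0 : ℝ) 1,
          w i + t • (w (i + 1) - w i) = p := by
        intro p
        rw [cycleEdge, segment_eq_image']
        rfl
      obtain ⟨δ, h1, h2⟩ := exists_delta_segment (hsum (w i)) (hsum (w (i + 1)))
        (by
          intro t ht h1 h2
          rw [← aa] at h1
          rw [← ab] at h2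
          rw [← az]
          by_contra! h3
          refine hout _ h1 h2 h3 (Or.inl (Set.mem_iUnion.2 ⟨i, (hpar _).2 ⟨t, ht, rfl⟩⟩)))
      refine ⟨δ, h1, fun p hz hap hbp hp => ?_⟩
      obtain ⟨t, ht, rfl⟩ := (hpar p).1 hp
      rw [aa, az] at hap
      rw [ab, az] at hbp
      rw [az] at hz
      exact h2 t ht hz hap hbp
    choose d hd0 hd using hi
    refine ⟨Finset.univ.inf' Finset.univ_nonempty d, by simp [Finset.lt_inf'_iff, hd0], ?_⟩
    intro p hzp hap hbp hp
    obtain ⟨i, hi⟩ := Set.mem_iUnion.1 hp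
    have hle : Finset.univ.inf' Finset.univ_nonempty d ≤ d i := Finset.inf'_le _ (Finset.mem_univ i)
    have := mul_le_mul_of_nonneg_right hle hzp.le
    exact hd i p hzp (by linarith) (by linarith) hi
  set N : Set (ℝ × ℝ) := {p | 0 < z p} ∩ ({p | 0 < a p + δ * z p} ∩ {p | 0 < b p + δ * z p}) with hN
  set T : Set (ℝ × ℝ) := {p | 0 ≤ a p ∧ 0 ≤ b p ∧ 0 ≤ z p} with hT
  have oN : IsOpen N := by
    refine (isOpen_lt continuous_const cz).inter ((isOpen_lt continuous_const ?_).inter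
      (isOpen_lt continuous_const ?_)) <;> fun_prop
  have cN : Convex ℝ N := by
    refine (conv z az).inter ((conv _ ?_).inter (conv _ ?_))
    · intro x y t
      simp only [aa, az]
      ring
    · intro x y t
      simp only [ab, az]
      ring
  have hZ : a Z = 0 ∧ b Z = 0 ∧ z Z = 1 := by
    refine ⟨?_, ?_, ?_⟩
    · simp only [ha, cross]
      ring
    · simp only [hb, cross]
      ring
    · simp only [hz]
      exact div_self hD
  have hZN : Z ∈ N := by
    simp [hN, hZ.1, hZ.2.1, hZ.2.2, hδ]
  have hZout : Z ∉ polyRegion w := hout Z hZ.1.ge hZ.2.1.ge (one_pos.trans_eq hZ.2.2.symm)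
  have hNU : N ⊆ (polyRegion w)ᶜ := fun p hp =>
    disjoint_polyRegion_of_preconnected cN.isPreconnected
      (fun q hq => hδb q hq.1 hq.2.1 hq.2.2) hZN hZout hp
  have cT : IsClosed T :=
    (isClosed_le continuous_const ca).inter ((isClosed_le continuous_const cb).inter
      (isClosed_le continuous_const cz))
  have hrep : ∀ p, p = a p • A + b p • B + z p • Z := by
    intro p
    simp only [ha, hb, hz]
    ext
    · simp only [Prod.fst_add, Prod.smul_fst, smul_eq_mul]
      field_simp
      simp only [cross]
      ring
    · simp only [Prod.snd_add, Prod.smul_snd, smul_eq_mul]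
      field_simp
      simp only [cross]
      ring
  -- the point with prescribed barycentric coordinates
  have hval : ∀ r s t : ℝ, r + s + t = 1 → a (r • A + s • B + t • Z) = r ∧
      b (r • A + s • B + t • Z) = s ∧ z (r • A + s • B + t • Z) = t := by
    intro r s t h
    have hr : r = 1 - s - t := by linarith
    subst hr
    refine ⟨?_, ?_, ?_⟩ <;> simp only [ha, hb, hz] <;> rw [div_eq_iff hD] <;>
      simp only [cross, Prod.fst_add, Prod.snd_add, Prod.smul_fst, Prod.smul_snd, smul_eq_mul] <;>
      ring
  have hNT : N \ T = (N ∩ {p | 0 < - a p}) ∪ (N ∩ {p | 0 < - b p}) := by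
    ext p
    simp only [hN, hT, Set.mem_sdiff, Set.mem_inter_iff, Set.mem_union, Set.mem_ofPred_eq]
    grind
  have cNa : Convex ℝ (N ∩ {p | 0 < - a p}) :=
    cN.inter (conv _ fun x y t => by rw [aa]; ring)
  have cNb : Convex ℝ (N ∩ {p | 0 < - b p}) :=
    cN.inter (conv _ fun x y t => by rw [ab]; ring)
  -- a point beyond `Z`, common to both convex pieces of `N \ T`
  obtain ⟨q, hqa, hqb⟩ : ∃ q, q ∈ N ∩ {p | 0 < - a p} ∧ q ∈ N ∩ {p | 0 < - b p} := by
    obtain ⟨h1, h2, h3⟩ := hval (-δ / 2) (-δ / 2) (1 + δ) (by ring)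
    have hq : (-δ / 2) • A + (-δ / 2) • B + (1 + δ) • Z ∈ N := by
      refine ⟨?_, ?_, ?_⟩ <;> simp only [Set.mem_ofPred_eq, h1, h2, h3] <;> nlinarith
    refine ⟨_, ⟨hq, ?_⟩, ⟨hq, ?_⟩⟩
    · simp only [Set.mem_ofPred_eq, h1]; linarith
    · simp only [Set.mem_ofPred_eq, h2]; linarith
  have hUT : (polyRegion w)ᶜ ∩ T ⊆ N := by
    rintro p ⟨hp, h1, h2, h3⟩
    rcases h3.eq_or_lt with h4 | h4
    · refine absurd (hAB ?_) hp
      refine ⟨a p, b p, h1, h2, ?_, ?_⟩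
      · linarith [hsum p]
      · conv_rhs => rw [hrep p, ← h4]
        simp
    · have := mul_pos hδ h4
      exact ⟨h4, by simp only [Set.mem_ofPred_eq]; linarith,
        by simp only [Set.mem_ofPred_eq]; linarith⟩
  refine isPreconnected_diff_of_nhd (polyRegion_compl w).2.1 (polyRegion_compl w).2.2 oN hNU cT hUT
    ?_ ?_
  · rw [hNT]
    exact IsPreconnected.union q hqa hqb cNa.isPreconnected cNb.isPreconnected
  · rw [hNT]
    exact ⟨q, Or.inl hqa⟩

/-! ### Inserting a vertex into an edge of a simple polygon -/

/-- The set of (unordered) pairs of endpoints of edges of the polygon. -/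
def polyEdges {m : ℕ} (w : Fin (m + 1) → ℝ × ℝ) : Set (Sym2 (ℝ × ℝ)) :=
  Set.range fun i => s(w i, w (i + 1))

lemma segment_subset_polyBoundary {m : ℕ} {w : Fin (m + 1) → ℝ × ℝ} {A B : ℝ × ℝ}
    (h : s(A, B) ∈ polyEdges w) : segment ℝ A B ⊆ polyBoundary w := by
  obtain ⟨i, hi⟩ := h
  refine Set.Subset.trans ?_ (Set.subset_iUnion _ i)
  rcases Sym2.eq_iff.1 hi with ⟨h1, h2⟩ | ⟨h1, h2⟩
  · rw [cycleEdge, h1, h2]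
  · rw [cycleEdge, h1, h2, segment_symm]

lemma polyRegion_congr {m n : ℕ} {w : Fin (m + 1) → ℝ × ℝ} {w' : Fin (n + 1) → ℝ × ℝ}
    (h : polyBoundary w = polyBoundary w') : polyRegion w = polyRegion w' := by
  simp only [polyRegion, polyInterior, h]

/-- A form of the noncrossing condition that is convenient to check and to use. -/
lemma isNoncrossingCycle_iff {m : ℕ} {w : Fin (m + 1) → ℝ × ℝ} (hm : 3 ≤ m + 1) :
    IsNoncrossingCycle w ↔ ∀ i j, i ≠ j → ∀ p ∈ cycleEdge w i, p ∈ cycleEdge w j →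
      (j = i + 1 ∧ p = w j) ∨ (i = j + 1 ∧ p = w i) := by
  constructor
  · rintro ⟨h1, h2⟩ i j hij p hi hj
    by_cases hji : j = i + 1
    · subst hji
      have : p ∈ cycleEdge w i ∩ cycleEdge w (i + 1) := ⟨hi, hj⟩
      rw [h1] at this
      exact Or.inl ⟨rfl, this⟩
    by_cases hij' : i = j + 1
    · subst hij'
      have : p ∈ cycleEdge w j ∩ cycleEdge w (j + 1) := ⟨hj, hi⟩
      rw [h1] at this
      exact Or.inr ⟨rfl, this⟩
    · have : p ∈ cycleEdge w i ∩ cycleEdge w j := ⟨hi, hj⟩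
      rw [h2 i j hij hji hij'] at this
      exact this.elim
  · intro h
    constructor
    · intro i
      have hne : i ≠ i + 1 := by
        intro he
        have : (1 : Fin (m + 1)) = 0 := by simpa using he
        rw [Fin.ext_iff] at this
        simp at this
        omega
      have hne2 : i ≠ i + 1 + 1 := by
        intro he
        have : (1 + 1 : Fin (m + 1)) = 0 := by
          rw [add_assoc] at he
          simpa using he
        rw [Fin.ext_iff] at this
        have e1 : ((1 : Fin (m + 1)) : ℕ) = 1 := by
          rw [Fin.val_one']
          exact Nat.mod_eq_of_lt (by omega)
        rw [Fin.val_add, e1, Nat.mod_eq_of_lt (by omega)] at this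
        simp at this
      ext p
      constructor
      · rintro ⟨h1, h2⟩
        rcases h i (i + 1) hne p h1 h2 with h | h
        · exact h.2
        · exact absurd h.1 hne2
      · rintro rfl
        exact ⟨right_mem_segment ℝ _ _, left_mem_segment ℝ _ _⟩
    · intro i j hij h1 h2
      ext p
      simp only [Set.mem_inter_iff, Set.mem_empty_iff_false, iff_false, not_and]
      intro h3 h4
      rcases h i j hij p h3 h4 with h | h
      · exact h1 h.1
      · exact h2 h.1

lemma IsSimplePolygon.rotate {m : ℕ} {w : Fin (m + 1) → ℝ × ℝ} (hw : IsSimplePolygon w)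
    (c : Fin (m + 1)) : IsSimplePolygon (fun i => w (i + c)) ∧
      polyBoundary (fun i => w (i + c)) = polyBoundary w ∧
      polyEdges (fun i => w (i + c)) = polyEdges w := by
  have he : ∀ i, cycleEdge (fun i => w (i + c)) i = cycleEdge w (i + c) := by
    intro i
    simp only [cycleEdge]
    rw [add_right_comm]
  refine ⟨⟨hw.1, hw.2.1.comp (add_left_injective c), ?_⟩, ?_, ?_⟩
  · rw [isNoncrossingCycle_iff hw.1]
    intro i j hij p hi hj
    rw [he] at hi hj
    rcases (isNoncrossingCycle_iff hw.1).1 hw.2.2 _ _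
      (fun h => hij (add_right_cancel h)) p hi hj with h | h
    · refine Or.inl ⟨?_, h.2⟩
      have := h.1
      rw [add_right_comm] at this
      exact add_right_cancel this
    · refine Or.inr ⟨?_, h.2⟩
      have := h.1
      rw [add_right_comm] at this
      exact add_right_cancel this
  · simp only [polyBoundary, he]
    exact (Equiv.addRight c).surjective.iUnion_comp (fun i => cycleEdge w i)
  · have : (fun i => s(w (i + c), w (i + 1 + c))) =
        (fun i => s(w i, w (i + 1))) ∘ (Equiv.addRight c) := by
      funext i
      simp [add_right_comm]
    simp only [polyEdges, this]
    exact (Equiv.addRight c).surjective.range_comp _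

lemma IsSimplePolygon.reverse {m : ℕ} {w : Fin (m + 1) → ℝ × ℝ} (hw : IsSimplePolygon w) :
    IsSimplePolygon (fun i => w (-i)) ∧
      polyBoundary (fun i => w (-i)) = polyBoundary w ∧
      polyEdges (fun i => w (-i)) = polyEdges w := by
  have hn : ∀ i : Fin (m + 1), -(i + 1) + 1 = -i := fun i => by abel
  have he : ∀ i, cycleEdge (fun i => w (-i)) i = cycleEdge w (-(i + 1)) := by
    intro i
    simp only [cycleEdge]
    rw [hn, segment_symm]
  have hsurj : Function.Surjective fun i : Fin (m + 1) => -(i + 1) :=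
    fun j => ⟨-j - 1, by simp⟩
  refine ⟨⟨hw.1, hw.2.1.comp neg_injective, ?_⟩, ?_, ?_⟩
  · rw [isNoncrossingCycle_iff hw.1]
    intro i j hij p hi hj
    rw [he] at hi hj
    rcases (isNoncrossingCycle_iff hw.1).1 hw.2.2 _ _
      (fun h => hij (add_right_cancel (neg_injective h))) p hi hj with h | h
    · have h1 := h.1
      rw [hn, neg_inj] at h1
      exact Or.inr ⟨h1.symm, by rw [h.2, ← h1]⟩
    · have h1 := h.1
      rw [hn, neg_inj] at h1
      exact Or.inl ⟨h1.symm, by rw [h.2, ← h1]⟩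
  · simp only [polyBoundary, he]
    exact hsurj.iUnion_comp (fun i => cycleEdge w i)
  · have : (fun i => s(w (-i), w (-(i + 1)))) =
        (fun i => s(w i, w (i + 1))) ∘ (fun i : Fin (m + 1) => -(i + 1)) := by
      funext i
      simp only [Function.comp, hn]
      exact Sym2.eq_swap
    simp only [polyEdges, this]
    exact hsurj.range_comp _

lemma IsSimplePolygon.vertex_mem_cycleEdge {m : ℕ} {w : Fin (m + 1) → ℝ × ℝ}
    (hw : IsSimplePolygon w) {i j : Fin (m + 1)} (h : w i ∈ cycleEdge w j) :
    j = i ∨ i = j + 1 := by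
  by_cases hij : i = j
  · exact Or.inl hij.symm
  · rcases (isNoncrossingCycle_iff hw.1).1 hw.2.2 i j hij _ (left_mem_segment ℝ _ _) h with h | h
    · exact absurd (hw.2.1 h.2) hij
    · exact Or.inr h.1

/-- `IsCombo A B Z α β γ p` says that `p` has barycentric coordinates `α, β, γ ≥ 0` with respect
to the triangle `A B Z`. -/
structure IsCombo (A B Z : ℝ × ℝ) (α β γ : ℝ) (p : ℝ × ℝ) : Prop where
  ha : 0 ≤ α
  hb : 0 ≤ β
  hc : 0 ≤ γ
  sum : α + β + γ = 1
  x : p.1 = α * A.1 + β * B.1 + γ * Z.1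
  y : p.2 = α * A.2 + β * B.2 + γ * Z.2

lemma IsCombo.swap {A B Z p : ℝ × ℝ} {α β γ : ℝ} (h : IsCombo A B Z α β γ p) :
    IsCombo B A Z β α γ p :=
  ⟨h.hb, h.ha, h.hc, by linarith [h.sum], by linarith [h.x], by linarith [h.y]⟩

lemma IsCombo.cross_eq {A B Z p : ℝ × ℝ} {α β γ : ℝ} (h : IsCombo A B Z α β γ p) :
    cross p B Z = α * cross A B Z ∧ cross A p Z = β * cross A B Z ∧
      cross A B p = γ * cross A B Z := by
  have : γ = 1 - α - β := by linarith [h.sum]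
  subst this
  simp only [cross, h.x, h.y]
  refine ⟨?_, ?_, ?_⟩ <;> ring

lemma isCombo_of_cross {A B Z p : ℝ × ℝ} (hD : cross A B Z ≠ 0)
    (h1 : 0 ≤ cross p B Z / cross A B Z) (h2 : 0 ≤ cross A p Z / cross A B Z)
    (h3 : 0 ≤ cross A B p / cross A B Z) :
    IsCombo A B Z (cross p B Z / cross A B Z) (cross A p Z / cross A B Z)
      (cross A B p / cross A B Z) p := by
  refine ⟨h1, h2, h3, ?_, ?_, ?_⟩
  · rw [← add_div, ← add_div, cross_sum, div_self hD]
  · field_simp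
    simp only [cross]
    ring
  · field_simp
    simp only [cross]
    ring

/-- Insertion of a new vertex between the last and the first one. -/
lemma insert_vertex_last {m : ℕ} {w : Fin (m + 1) → ℝ × ℝ} (hw : IsSimplePolygon w)
    {A B Z : ℝ × ℝ} (hA : w (Fin.last m) = A) (hB : w 0 = B) (hD : cross A B Z ≠ 0)
    (hout : ∀ α β γ p, IsCombo A B Z α β γ p → 0 < γ → p ∉ polyRegion w) :
    ∃ w' : Fin (m + 1 + 1) → ℝ × ℝ, IsSimplePolygon w' ∧
      (∀ e ∈ polyEdges w, e ≠ s(A, B) → e ∈ polyEdges w') ∧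
      s(A, Z) ∈ polyEdges w' ∧ s(Z, B) ∈ polyEdges w' ∧
      ∀ p ∈ polyRegion w', p ∈ polyRegion w ∨ ∃ α β γ, IsCombo A B Z α β γ p := by
  have hm := hw.1
  set w' : Fin (m + 1 + 1) → ℝ × ℝ := Fin.snoc w Z with hw'
  have v1 : ∀ j : Fin (m + 1), w' j.castSucc = w j := fun j =>
    Fin.snoc_castSucc (α := fun _ => ℝ × ℝ) _ _ _
  have v2 : w' (Fin.last (m + 1)) = Z := Fin.snoc_last (α := fun _ => ℝ × ℝ) _ _
  have n1 : ∀ j : Fin m, j.castSucc.castSucc + 1 = j.succ.castSucc := fun j => by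
    rw [Fin.coeSucc_eq_succ, Fin.succ_castSucc]
  have n2 : (Fin.last m).castSucc + 1 = Fin.last (m + 1) := by
    rw [Fin.coeSucc_eq_succ, Fin.succ_last]
  have n3 : Fin.last (m + 1) + 1 = (0 : Fin (m + 1)).castSucc := by
    rw [Fin.last_add_one, Fin.castSucc_zero]
  have n0 : w (Fin.last m + 1) = B := by rw [Fin.last_add_one, hB]
  have e1 : ∀ j : Fin m, cycleEdge w' j.castSucc.castSucc = cycleEdge w j.castSucc := by
    intro j
    simp only [cycleEdge]
    rw [n1, v1, v1, Fin.coeSucc_eq_succ]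
  have e2 : cycleEdge w' (Fin.last m).castSucc = segment ℝ A Z := by
    simp only [cycleEdge]
    rw [n2, v1, v2, hA]
  have e3 : cycleEdge w' (Fin.last (m + 1)) = segment ℝ Z B := by
    simp only [cycleEdge]
    rw [n3, v1, v2, hB]
  have hreg : ∀ j, cycleEdge w j ⊆ polyRegion w := fun j p hp => Or.inl (Set.mem_iUnion.2 ⟨j, hp⟩)
  have c2 : ∀ p ∈ segment ℝ A Z, ∃ α γ, IsCombo A B Z α 0 γ p := by
    rintro p ⟨α, γ, h1, h2, h3, rfl⟩
    exact ⟨α, γ, h1, le_rfl, h2, by linarith, by simp, by simp⟩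
  have c3 : ∀ p ∈ segment ℝ Z B, ∃ β γ, IsCombo A B Z 0 β γ p := by
    rintro p ⟨γ, β, h1, h2, h3, rfl⟩
    exact ⟨β, γ, le_rfl, h2, h1, by linarith, by simp; ring, by simp; ring⟩
  have s2 : ∀ p ∈ segment ℝ A Z, p ∈ polyRegion w → p = A := by
    intro p hp hr
    obtain ⟨α, γ, h⟩ := c2 p hp
    rcases h.hc.eq_or_lt with h0 | h0
    · have h1 : α = 1 := by linarith [h.sum]
      subst h1
      ext
      · rw [h.x, ← h0]; ring
      · rw [h.y, ← h0]; ring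
    · exact absurd hr (hout _ _ _ _ h h0)
  have s3 : ∀ p ∈ segment ℝ Z B, p ∈ polyRegion w → p = B := by
    intro p hp hr
    obtain ⟨β, γ, h⟩ := c3 p hp
    rcases h.hc.eq_or_lt with h0 | h0
    · have h1 : β = 1 := by linarith [h.sum]
      subst h1
      ext
      · rw [h.x, ← h0]; ring
      · rw [h.y, ← h0]; ring
    · exact absurd hr (hout _ _ _ _ h h0)
  have s23 : ∀ p ∈ segment ℝ A Z, p ∈ segment ℝ Z B → p = Z := by
    intro p hp hp'
    obtain ⟨α, γ, h⟩ := c2 p hp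
    obtain ⟨β', γ', h'⟩ := c3 p hp'
    have h0 := h.cross_eq.1.symm.trans h'.cross_eq.1
    have hα : α = 0 := by simpa [hD] using h0
    have hγ : γ = 1 := by linarith [h.sum]
    ext
    · rw [h.x, hα, hγ]; ring
    · rw [h.y, hα, hγ]; ring
  have hZ : Z ∉ polyRegion w :=
    hout 0 0 1 Z ⟨le_rfl, le_rfl, zero_le_one, by norm_num, by ring, by ring⟩ one_pos
  have hinj : Function.Injective w' := by
    rw [hw', Fin.snoc_injective_iff]
    refine ⟨hw.2.1, ?_⟩
    rintro ⟨i, hi⟩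
    exact hZ (hi ▸ Or.inl (vertex_mem_polyBoundary w i))
  have hABs : segment ℝ A B = cycleEdge w (Fin.last m) := by
    rw [cycleEdge, hA, n0]
  have simple : IsSimplePolygon w' := by
    refine ⟨by omega, hinj, (isNoncrossingCycle_iff (by omega)).2 ?_⟩
    have key : ∀ i j, i < j → ∀ p ∈ cycleEdge w' i, p ∈ cycleEdge w' j →
        (j = i + 1 ∧ p = w' j) ∨ (i = j + 1 ∧ p = w' i) := by
      intro i j hij p hi hj
      induction j using Fin.lastCases with
      | last =>
        rw [e3] at hj
        induction i using Fin.lastCases with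
        | last => exact absurd hij (lt_irrefl _)
        | cast i =>
          induction i using Fin.lastCases with
          | last =>
            rw [e2] at hi
            exact Or.inl ⟨n2.symm, by rw [v2, s23 p hi hj]⟩
          | cast i =>
            rw [e1] at hi
            have hp := s3 p hj (hreg _ hi)
            rw [hp, ← hB] at hi
            rcases hw.vertex_mem_cycleEdge hi with h | h
            · refine Or.inr ⟨by rw [n3, h], ?_⟩
              rw [v1, h, hp, hB]
            · rw [Fin.coeSucc_eq_succ] at h
              exact absurd h.symm (Fin.succ_ne_zero _)
      | cast j =>
        induction j using Fin.lastCases with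
        | last =>
          rw [e2] at hj
          induction i using Fin.lastCases with
          | last => exact absurd hij (not_lt.2 (Fin.le_last _))
          | cast i =>
            induction i using Fin.lastCases with
            | last => exact absurd hij (lt_irrefl _)
            | cast i =>
              rw [e1] at hi
              have hp := s2 p hj (hreg _ hi)
              rw [hp, ← hA] at hi
              rcases hw.vertex_mem_cycleEdge hi with h | h
              · exact absurd h (Fin.castSucc_lt_last i).ne
              · rw [Fin.coeSucc_eq_succ] at h
                refine Or.inl ⟨by rw [n1, h], ?_⟩
                rw [v1, hA, hp]
        | cast j =>
          rw [e1] at hj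
          induction i using Fin.lastCases with
          | last => exact absurd hij (not_lt.2 (Fin.le_last _))
          | cast i =>
            induction i using Fin.lastCases with
            | last =>
              exact absurd hij (not_lt.2 (Fin.castSucc_le_castSucc_iff.2 (Fin.le_last _)))
            | cast i =>
              rw [e1] at hi
              have hne : i.castSucc ≠ j.castSucc := fun h => by
                rw [h] at hij
                exact lt_irrefl _ hij
              rw [v1, v1, n1, n1]
              rcases (isNoncrossingCycle_iff hw.1).1 hw.2.2 _ _ hne p hi hj with h | h
              · rw [Fin.coeSucc_eq_succ] at h
                exact Or.inl ⟨by rw [h.1], h.2⟩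
              · rw [Fin.coeSucc_eq_succ] at h
                exact Or.inr ⟨by rw [h.1], h.2⟩
    intro i j hij p hi hj
    rcases lt_or_gt_of_ne hij with h | h
    · exact key i j h p hi hj
    · exact (key j i h p hj hi).symm
  refine ⟨w', simple, ?_, ⟨(Fin.last m).castSucc, ?_⟩, ⟨Fin.last (m + 1), ?_⟩, ?_⟩
  · rintro e ⟨i, rfl⟩ he
    induction i using Fin.lastCases with
    | last =>
      simp only [hA, n0] at he
      exact absurd rfl he
    | cast i =>
      refine ⟨i.castSucc.castSucc, ?_⟩
      simp only
      rw [n1, v1, v1, Fin.coeSucc_eq_succ]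
  · simp only
    rw [n2, v1, v2, hA]
  · simp only
    rw [n3, v1, v2, hB]
  · set T : Set (ℝ × ℝ) := {p | 0 ≤ cross p B Z / cross A B Z ∧
      0 ≤ cross A p Z / cross A B Z ∧ 0 ≤ cross A B p / cross A B Z} with hT
    have hTin : ∀ p α β γ, IsCombo A B Z α β γ p → p ∈ T := by
      intro p α β γ h
      obtain ⟨h1, h2, h3⟩ := h.cross_eq
      refine ⟨?_, ?_, ?_⟩
      · rw [h1, mul_div_cancel_right₀ _ hD]; exact h.ha
      · rw [h2, mul_div_cancel_right₀ _ hD]; exact h.hb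
      · rw [h3, mul_div_cancel_right₀ _ hD]; exact h.hc
    have hpre : IsPreconnected ((polyRegion w)ᶜ \ T) := by
      refine isPreconnected_compl_union_triangle hD (hABs ▸ hreg _) ?_
      intro p h1 h2 h3
      exact hout _ _ _ p (isCombo_of_cross hD h1 h2 h3.le) h3
    have hTb : Bornology.IsBounded T := by
      refine (Metric.isBounded_closedBall (x := (0 : ℝ × ℝ)) (r := ‖A‖ + ‖B‖ + ‖Z‖)).subset ?_
      rintro p ⟨h1, h2, h3⟩
      have h := isCombo_of_cross hD h1 h2 h3
      have hp : p = (cross p B Z / cross A B Z) • A + (cross A p Z / cross A B Z) • B +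
          (cross A B p / cross A B Z) • Z := by
        ext
        · exact h.x
        · exact h.y
      rw [mem_closedBall_zero_iff, hp]
      have hs := h.sum
      refine (norm_add₃_le).trans ?_
      gcongr <;> rw [norm_smul, Real.norm_eq_abs, abs_of_nonneg (by assumption)] <;>
        exact mul_le_of_le_one_left (norm_nonneg _) (by linarith)
    have hK : (polyRegion w)ᶜ \ T = (polyRegion w ∪ T)ᶜ := by
      rw [Set.compl_union]; rfl
    rw [hK] at hpre
    intro p hp
    by_contra! hcon
    refine not_mem_polyRegion_of_unbounded hpre
      (not_isBounded_compl ((polyRegion_compl w).1.union hTb)) ?_ (x := p) ?_ hp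
    · refine Set.compl_subset_compl.2 (Set.iUnion_subset fun i => ?_)
      induction i using Fin.lastCases with
      | last =>
        rw [e3]
        intro q hq
        obtain ⟨β, γ, h⟩ := c3 q hq
        exact Or.inr (hTin _ _ _ _ h)
      | cast i =>
        induction i using Fin.lastCases with
        | last =>
          rw [e2]
          intro q hq
          obtain ⟨β, γ, h⟩ := c2 q hq
          exact Or.inr (hTin _ _ _ _ h)
        | cast i =>
          rw [e1]
          exact (hreg _).trans Set.subset_union_left
    · rintro (h | ⟨h1, h2, h3⟩)
      · exact hcon.1 h
      · exact hcon.2 _ _ _ (isCombo_of_cross hD h1 h2 h3)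

/-- If the triangle `A B Z` meets the closed region of a simple polygon with edge `[A, B]` only in
that edge, then the edge may be replaced by `[A, Z]` and `[Z, B]`, and the region grows by at most
the triangle. -/
lemma insert_vertex {m : ℕ} {w : Fin (m + 1) → ℝ × ℝ} (hw : IsSimplePolygon w)
    {A B Z : ℝ × ℝ} (hAB : s(A, B) ∈ polyEdges w) (hD : cross A B Z ≠ 0)
    (hout : ∀ α β γ p, IsCombo A B Z α β γ p → 0 < γ → p ∉ polyRegion w) :
    ∃ w' : Fin (m + 1 + 1) → ℝ × ℝ, IsSimplePolygon w' ∧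
      (∀ e ∈ polyEdges w, e ≠ s(A, B) → e ∈ polyEdges w') ∧
      s(A, Z) ∈ polyEdges w' ∧ s(Z, B) ∈ polyEdges w' ∧
      ∀ p ∈ polyRegion w', p ∈ polyRegion w ∨ ∃ α β γ, IsCombo A B Z α β γ p := by
  have main : ∀ {w : Fin (m + 1) → ℝ × ℝ}, IsSimplePolygon w → ∀ i : Fin (m + 1), w i = A →
      w (i + 1) = B → (∀ α β γ p, IsCombo A B Z α β γ p → 0 < γ → p ∉ polyRegion w) →
      ∃ w' : Fin (m + 1 + 1) → ℝ × ℝ, IsSimplePolygon w' ∧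
      (∀ e ∈ polyEdges w, e ≠ s(A, B) → e ∈ polyEdges w') ∧
      s(A, Z) ∈ polyEdges w' ∧ s(Z, B) ∈ polyEdges w' ∧
      ∀ p ∈ polyRegion w', p ∈ polyRegion w ∨ ∃ α β γ, IsCombo A B Z α β γ p := by
    intro w hw i hA hB hout
    obtain ⟨r1, r2, r3⟩ := hw.rotate (i + 1)
    have r4 := polyRegion_congr r2
    have := insert_vertex_last r1 (A := A) (B := B) (Z := Z)
      (by
        rw [add_comm i 1, ← add_assoc, Fin.last_add_one, zero_add, hA])
      (by simp [hB]) hD (by rw [r4]; exact hout)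
    rw [r3, r4] at this
    exact this
  obtain ⟨i, hi⟩ := hAB
  rcases Sym2.eq_iff.1 hi with ⟨h1, h2⟩ | ⟨h1, h2⟩
  · exact main hw i h1 h2 hout
  · obtain ⟨r1, r2, r3⟩ := hw.reverse
    have r4 := polyRegion_congr r2
    have := main r1 (-(i + 1)) (by rw [neg_neg]; exact h2) (by rw [← h1]; congr 1; abel)
      (by rw [r4]; exact hout)
    rw [r3, r4] at this
    exact this

/-! ### Linear changes of coordinates -/

lemma cycleEdge_map {m : ℕ} (w : Fin (m + 1) → ℝ × ℝ) (e : (ℝ × ℝ) ≃L[ℝ] (ℝ × ℝ))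
    (i : Fin (m + 1)) : cycleEdge (fun i => e (w i)) i = e '' cycleEdge w i := by
  simp only [cycleEdge]
  exact (image_segment ℝ (e : (ℝ × ℝ) →ₗ[ℝ] (ℝ × ℝ)).toAffineMap (w i) (w (i + 1))).symm

lemma polyBoundary_map {m : ℕ} (w : Fin (m + 1) → ℝ × ℝ) (e : (ℝ × ℝ) ≃L[ℝ] (ℝ × ℝ)) :
    polyBoundary (fun i => e (w i)) = e '' polyBoundary w := by
  simp only [polyBoundary, cycleEdge_map, Set.image_iUnion]

lemma IsSimplePolygon.map {m : ℕ} {w : Fin (m + 1) → ℝ × ℝ} (hw : IsSimplePolygon w)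
    (e : (ℝ × ℝ) ≃L[ℝ] (ℝ × ℝ)) : IsSimplePolygon (fun i => e (w i)) := by
  refine ⟨hw.1, e.injective.comp hw.2.1, ?_, ?_⟩
  · intro i
    rw [cycleEdge_map, cycleEdge_map, ← Set.image_inter e.injective, hw.2.2.1 i,
      Set.image_singleton]
  · intro i j h1 h2 h3
    rw [cycleEdge_map, cycleEdge_map, ← Set.image_inter e.injective, hw.2.2.2 i j h1 h2 h3,
      Set.image_empty]

lemma isBounded_image_iff (e : (ℝ × ℝ) ≃L[ℝ] (ℝ × ℝ)) (s : Set (ℝ × ℝ)) :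
    Bornology.IsBounded (e '' s) ↔ Bornology.IsBounded s := by
  constructor
  · intro h
    have := e.symm.lipschitz.isBounded_image h
    rwa [← Set.image_comp, ContinuousLinearEquiv.symm_comp_self, Set.image_id] at this
  · exact e.lipschitz.isBounded_image

lemma mem_polyRegion_map {m : ℕ} (w : Fin (m + 1) → ℝ × ℝ) (e : (ℝ × ℝ) ≃L[ℝ] (ℝ × ℝ))
    (p : ℝ × ℝ) : e p ∈ polyRegion (fun i => e (w i)) ↔ p ∈ polyRegion w := by
  have hb : ∀ p, e p ∈ polyBoundary (fun i => e (w i)) ↔ p ∈ polyBoundary w := fun p => by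
    rw [polyBoundary_map]
    exact e.injective.mem_set_image
  have hc : (polyBoundary (fun i => e (w i)))ᶜ = e '' (polyBoundary w)ᶜ := by
    rw [polyBoundary_map, Set.image_compl_eq e.bijective]
  simp only [polyRegion, polyInterior, Set.mem_union, Set.mem_ofPred_eq, hb]
  refine or_congr Iff.rfl (and_congr_right fun hp => ?_)
  rw [hc]
  have := e.toHomeomorph.image_connectedComponentIn (s := (polyBoundary w)ᶜ) (x := p) hp
  change e '' _ = connectedComponentIn (e '' _) (e p) at this
  rw [← this, isBounded_image_iff]

lemma mem_polyEdges_map {m : ℕ} {w : Fin (m + 1) → ℝ × ℝ} (e : (ℝ × ℝ) ≃L[ℝ] (ℝ × ℝ))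
    {A B : ℝ × ℝ} (h : s(A, B) ∈ polyEdges w) : s(e A, e B) ∈ polyEdges (fun i => e (w i)) := by
  obtain ⟨i, hi⟩ := h
  refine ⟨i, ?_⟩
  have := congrArg (Sym2.map e) hi
  simpa using this

/-- The invertible linear map `(x, y) ↦ (s (x + t y), τ y)`. -/
noncomputable def shear (s t τ : ℝ) (hs : s ≠ 0) (hτ : τ ≠ 0) : (ℝ × ℝ) ≃L[ℝ] (ℝ × ℝ) :=
  LinearEquiv.toContinuousLinearEquiv
    { toFun := fun p => (s * (p.1 + t * p.2), τ * p.2)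
      map_add' := fun p q => by ext <;> simp <;> ring
      map_smul' := fun a p => by ext <;> simp <;> ring
      invFun := fun p => (p.1 / s - t * (p.2 / τ), p.2 / τ)
      left_inv := fun p => by ext <;> simp <;> field_simp; ring
      right_inv := fun p => by ext <;> simp <;> field_simp }

lemma shear_apply (s t τ : ℝ) (hs : s ≠ 0) (hτ : τ ≠ 0) (p : ℝ × ℝ) :
    shear s t τ hs hτ p = (s * (p.1 + t * p.2), τ * p.2) := rfl

/-- Reflection in the horizontal axis. -/
noncomputable def yFlip : (ℝ × ℝ) ≃L[ℝ] (ℝ × ℝ) := shear 1 0 (-1) one_ne_zero (by norm_num)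

lemma yFlip_apply (p : ℝ × ℝ) : yFlip p = (p.1, -p.2) := by
  simp [yFlip, shear_apply]

lemma yFlip_yFlip (p : ℝ × ℝ) : yFlip (yFlip p) = p := by
  simp [yFlip_apply]

lemma cross_shear (s t τ : ℝ) (hs : s ≠ 0) (hτ : τ ≠ 0) (p q r : ℝ × ℝ) :
    cross (shear s t τ hs hτ p) (shear s t τ hs hτ q) (shear s t τ hs hτ r) =
      s * τ * cross p q r := by
  simp only [cross, shear_apply]
  ring

lemma collinear_of_cross_eq_zero {p q r : ℝ × ℝ} (h : cross p q r = 0) :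
    Collinear ℝ ({p, q, r} : Set (ℝ × ℝ)) := by
  by_cases hpq : p = q
  · subst hpq
    simpa using collinear_pair ℝ p r
  rw [collinear_iff_of_mem (p₀ := p) (by simp)]
  refine ⟨q - p, ?_⟩
  have hne : q.1 - p.1 ≠ 0 ∨ q.2 - p.2 ≠ 0 := by
    by_contra! hcon
    exact hpq (Prod.ext (by linarith [hcon.1]) (by linarith [hcon.2]))
  simp only [cross] at h
  intro x hx
  simp only [Set.mem_insert_iff, Set.mem_singleton_iff] at hx
  rcases hx with rfl | rfl | rfl
  · exact ⟨0, by simp⟩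
  · exact ⟨1, by simp⟩
  · rcases hne with hne | hne
    · refine ⟨(x.1 - p.1) / (q.1 - p.1), ?_⟩
      ext
      · simp
        field_simp
        ring
      · simp
        field_simp
        linarith
    · refine ⟨(x.2 - p.2) / (q.2 - p.2), ?_⟩
      ext
      · simp
        field_simp
        linarith
      · simp
        field_simp
        ring

/-! ### The invariant of the construction -/

/-- Normalised position: the points are in general position, their abscissas are at least `1` apart
and lie in `[-N, N - 1]`, and their ordinates are so small that even lines through two of the points
stay within height `η = 1 / (16 N)` of the horizontal axis over `[-N, N + 1]`. -/
structure Normalized (P : Finset (ℝ × ℝ)) (N η ε : ℝ) : Prop where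
  one_le : 1 ≤ N
  eta : 16 * (N * η) = 1
  eps_nonneg : 0 ≤ ε
  eps : 20 * (N * ε) ≤ η
  x_ge : ∀ p ∈ P, -N ≤ p.1
  x_le : ∀ p ∈ P, p.1 ≤ N - 1
  y_ge : ∀ p ∈ P, -ε ≤ p.2
  y_le : ∀ p ∈ P, p.2 ≤ ε
  sep : ∀ p ∈ P, ∀ q ∈ P, p ≠ q → 1 ≤ |p.1 - q.1|
  gp : ∀ p ∈ P, ∀ q ∈ P, ∀ r ∈ P, p ≠ q → p ≠ r → q ≠ r → cross p q r ≠ 0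

/-- The shape of the polygon during the construction. Its closed region lies to the right of the
polygonal line through `(N + 1, -2)`, `(v, -1)`, `(u, 1)`, `(N + 1, 2)`, except that within height
`η` of the horizontal axis it is only known to lie to the right of `min v u`. -/
structure Bounds (N η v u : ℝ) (R : Set (ℝ × ℝ)) : Prop where
  lo : ∀ p ∈ R, -2 ≤ p.2
  hi : ∀ p ∈ R, p.2 ≤ 2
  bot : ∀ p ∈ R, p.2 ≤ -1 → 0 ≤ p.1 - (N + 1) + (p.2 + 2) * (N + 1 - v)
  top : ∀ p ∈ R, 1 ≤ p.2 → 0 ≤ p.1 - (N + 1) + (2 - p.2) * (N + 1 - u)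
  mid : ∀ p ∈ R, -1 < p.2 → p.2 < 1 → v ≤ p.1 ∨ u ≤ p.1
  low : ∀ p ∈ R, -1 < p.2 → p.2 < -η → v ≤ p.1
  high : ∀ p ∈ R, p.2 < 1 → η < p.2 → u ≤ p.1

/-- The state of the construction: a simple polygon whose boundary passes through the points `D`
treated so far and whose closed region contains no other point of `P`; two of its edges are
available for going further to the left below, respectively above, the points of `P`. -/
structure Sweep (P : Finset (ℝ × ℝ)) (N η v u : ℝ) (D : Finset (ℝ × ℝ)) {m : ℕ}
    (w : Fin (m + 1) → ℝ × ℝ) : Prop where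
  simple : IsSimplePolygon w
  eb : s((v, -1), (N + 1, -2)) ∈ polyEdges w
  et : s((u, 1), (N + 1, 2)) ∈ polyEdges w
  hv : v ≤ N
  hu : u ≤ N
  sub : D ⊆ P
  mem : ∀ p ∈ D, p ∈ polyBoundary w
  only : ∀ p ∈ P, p ∈ polyRegion w → p ∈ D
  bounds : Bounds N η v u (polyRegion w)

lemma sym2_ne {A B C D : ℝ × ℝ} (h1 : A ≠ C) (h2 : A ≠ D) : s(A, B) ≠ s(C, D) := by
  intro h
  rcases Sym2.eq_iff.1 h with h | h
  · exact h1 h.1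
  · exact h2 h.1

lemma sym2_ne' {A B C D : ℝ × ℝ} (h1 : B ≠ C) (h2 : B ≠ D) : s(A, B) ≠ s(C, D) := by
  rw [Sym2.eq_swap]
  exact sym2_ne h1 h2

/-- Boundary points off the removed edge survive its replacement. -/
lemma mem_polyBoundary_of_edges {m n : ℕ} {w : Fin (m + 1) → ℝ × ℝ} {w' : Fin (n + 1) → ℝ × ℝ}
    {A B : ℝ × ℝ} (h : ∀ e ∈ polyEdges w, e ≠ s(A, B) → e ∈ polyEdges w') {p : ℝ × ℝ}
    (hp : p ∈ polyBoundary w) (hpAB : p ∉ segment ℝ A B) : p ∈ polyBoundary w' := by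
  obtain ⟨i, hi⟩ := Set.mem_iUnion.1 hp
  refine segment_subset_polyBoundary (h _ ⟨i, rfl⟩ ?_) hi
  intro he
  refine hpAB ?_
  rcases Sym2.eq_iff.1 he with ⟨h1, h2⟩ | ⟨h1, h2⟩
  · rw [← h1, ← h2]; exact hi
  · rw [← h1, ← h2, segment_symm]; exact hi

/-- Coordinates of a point of a segment. -/
lemma exists_of_mem_segment {A B p : ℝ × ℝ} (h : p ∈ segment ℝ A B) : ∃ t : ℝ, 0 ≤ t ∧ t ≤ 1 ∧
    p.1 = A.1 + t * (B.1 - A.1) ∧ p.2 = A.2 + t * (B.2 - A.2) := by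
  rw [segment_eq_image'] at h
  obtain ⟨t, ⟨h0, h1⟩, rfl⟩ := h
  exact ⟨t, h0, h1, by simp, by simp⟩

lemma mem_segment_of {A B p : ℝ × ℝ} {t : ℝ} (h0 : 0 ≤ t) (h1 : t ≤ 1)
    (hx : p.1 = A.1 + t * (B.1 - A.1)) (hy : p.2 = A.2 + t * (B.2 - A.2)) : p ∈ segment ℝ A B := by
  rw [segment_eq_image']
  refine ⟨t, ⟨h0, h1⟩, ?_⟩
  ext
  · simp [hx]
  · simp [hy]

/-- The first two insertions of a step: run below the points to the abscissa `a`, and go up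
from there to a vertex `(a + κ, j)` near the horizontal axis. -/
lemma two_step {P : Finset (ℝ × ℝ)} {N η ε v u : ℝ} {D : Finset (ℝ × ℝ)} {m : ℕ}
    {w : Fin (m + 1) → ℝ × ℝ} (hP : Normalized P N η ε) (h : Sweep P N η v u D w) {a κ j : ℝ}
    (ha : -N ≤ a) (hav : a + 1 ≤ v) (hau : a + 1 ≤ u) (hκ : 0 ≤ κ) (hκη : κ ≤ η)
    (hj : -η ≤ j) (hj' : j ≤ η) :
    ∃ w' : Fin (m + 2 + 1) → ℝ × ℝ, IsSimplePolygon w' ∧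
      s((a, -1), (N + 1, -2)) ∈ polyEdges w' ∧ s((u, 1), (N + 1, 2)) ∈ polyEdges w' ∧
      s((a, -1), (a + κ, j)) ∈ polyEdges w' ∧ s((a + κ, j), (v, -1)) ∈ polyEdges w' ∧
      (∀ p ∈ polyBoundary w, -1 < p.2 → p ∈ polyBoundary w') ∧
      ∀ p ∈ polyRegion w', p ∈ polyRegion w ∨
        (∃ α β γ, IsCombo (v, -1) (N + 1, -2) (a, -1) α β γ p) ∨
        ∃ α β γ, IsCombo (a, -1) (v, -1) (a + κ, j) α β γ p := by
  have hη : 0 < η := by nlinarith [hP.one_le, hP.eta]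
  have hη1 : 16 * η ≤ 1 := by nlinarith [hP.one_le, hP.eta]
  have hNη := hP.eta
  have hv := h.hv
  obtain ⟨w₁, s₁, k₁, e₁, f₁, r₁⟩ := insert_vertex h.simple h.eb (Z := (a, -1))
    (by simp only [cross]; intro h0; ring_nf at h0; linarith)
    (by
      intro α β γ p hp hγ hpr
      have hx := hp.x
      have hy := hp.y
      have hs := hp.sum
      have h1 := hp.ha
      have h2 := hp.hb
      simp only at hx hy
      have := h.bounds.bot p hpr (by linarith)
      have e : p.1 - (N + 1) + (p.2 + 2) * (N + 1 - v) = γ * (a - v) := by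
        have hα : α = 1 - β - γ := by linarith
        rw [hx, hy, hα]
        ring
      rw [e] at this
      nlinarith)
  obtain ⟨w₂, s₂, k₂, e₂, f₂, r₂⟩ := insert_vertex s₁ (A := (a, -1)) (B := (v, -1))
    (Sym2.eq_swap ▸ e₁) (Z := (a + κ, j))
    (by
      simp only [cross]
      have : 0 < (v - a) * (j - -1) := mul_pos (by linarith) (by linarith)
      intro h0
      linarith)
    (by
      intro α β γ p hp hγ hpr
      have hx := hp.x
      have hy := hp.y
      have hs := hp.sum
      have h1 := hp.ha
      have h2 := hp.hb
      simp only at hx hy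
      have hy1 : -1 < p.2 := by nlinarith
      rcases r₁ p hpr with hr | ⟨α', β', γ', hq⟩
      · by_cases hlow : p.2 < -η
        · have := h.bounds.low p hr hy1 hlow
          nlinarith
        · have hγ1 : 1 - γ ≤ 2 * η := by nlinarith
          have hβ : β * (v - a) ≤ 2 * η * (2 * N) := by
            apply mul_le_mul <;> linarith
          have hx1 : p.1 < a + 1 := by nlinarith
          rcases h.bounds.mid p hr hy1 (by nlinarith) with h | h <;> linarith
      · have hy' := hq.y
        have h2 := hq.hb
        have := hq.sum
        simp only at hy'
        linarith)
  refine ⟨w₂, s₂, k₂ _ f₁ (sym2_ne' ?_ ?_), k₂ _ (k₁ _ h.et (sym2_ne ?_ ?_)) (sym2_ne ?_ ?_),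
    e₂, f₂, ?_, ?_⟩
  · simp [Prod.ext_iff]
  · simp [Prod.ext_iff]
  · simp only [ne_eq, Prod.ext_iff]; norm_num
  · simp only [ne_eq, Prod.ext_iff]; norm_num
  · simp only [ne_eq, Prod.ext_iff]; norm_num
  · simp only [ne_eq, Prod.ext_iff]; norm_num
  · intro p hp hpy
    refine mem_polyBoundary_of_edges k₂ (mem_polyBoundary_of_edges k₁ hp ?_) ?_
    · intro hs
      obtain ⟨t, h0, h1, -, h2⟩ := exists_of_mem_segment hs
      simp only at h2
      linarith
    · intro hs
      obtain ⟨t, h0, h1, -, h2⟩ := exists_of_mem_segment hs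
      simp only at h2
      linarith
  · intro p hp
    rcases r₂ p hp with h | h
    · rcases r₁ p h with h | h
      · exact Or.inl h
      · exact Or.inr (Or.inl h)
    · exact Or.inr (Or.inr h)

/-- The bounds persist when the two triangles of `two_step`, and possibly a further part of the
strip around the horizontal axis to the right of `a`, are added. -/
lemma Bounds.step {N η v u a : ℝ} {R R' : Set (ℝ × ℝ)} (h : Bounds N η v u R)
    (hη : η < 1) (hη0 : 0 < η) (hav : a ≤ v) (hau : a ≤ u)
    (hR : ∀ p ∈ R', p ∈ R ∨ (∃ α β γ, IsCombo (v, -1) (N + 1, -2) (a, -1) α β γ p) ∨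
      (a ≤ p.1 ∧ -1 ≤ p.2 ∧ p.2 ≤ η)) : Bounds N η a u R' := by
  have tri : ∀ p : ℝ × ℝ, (∃ α β γ, IsCombo (v, -1) (N + 1, -2) (a, -1) α β γ p) →
      -2 ≤ p.2 ∧ p.2 ≤ -1 ∧ 0 ≤ p.1 - (N + 1) + (p.2 + 2) * (N + 1 - a) := by
    rintro p ⟨α, β, γ, hp⟩
    have hx := hp.x
    have hy := hp.y
    have hs := hp.sum
    have h1 := hp.ha
    have h2 := hp.hb
    have h3 := hp.hc
    simp only at hx hy
    refine ⟨by linarith, by linarith, ?_⟩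
    have e : p.1 - (N + 1) + (p.2 + 2) * (N + 1 - a) = α * (v - a) := by
      have hγ : γ = 1 - α - β := by linarith
      rw [hx, hy, hγ]
      ring
    rw [e]
    exact mul_nonneg h1 (by linarith)
  constructor
  · intro p hp
    rcases hR p hp with h' | h' | h'
    · exact h.lo p h'
    · exact (tri p h').1
    · linarith
  · intro p hp
    rcases hR p hp with h' | h' | h'
    · exact h.hi p h'
    · linarith [(tri p h').2.1]
    · linarith
  · intro p hp hp1
    rcases hR p hp with h' | h' | h'
    · have h1 := h.bot p h' hp1
      have h2 := h.lo p h'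
      nlinarith
    · exact (tri p h').2.2
    · have : p.2 = -1 := by linarith
      rw [this]
      linarith
  · intro p hp hp1
    rcases hR p hp with h' | h' | h'
    · exact h.top p h' hp1
    · linarith [(tri p h').2.1]
    · linarith
  · intro p hp hp1 hp2
    left
    rcases hR p hp with h' | h' | h'
    · rcases h.mid p h' hp1 hp2 with h | h <;> linarith
    · linarith [(tri p h').2.1]
    · linarith
  · intro p hp hp1 hp2
    rcases hR p hp with h' | h' | h'
    · linarith [h.low p h' hp1 hp2]
    · linarith [(tri p h').2.1]
    · linarith
  · intro p hp hp1 hp2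
    rcases hR p hp with h' | h' | h'
    · exact h.high p h' hp1 hp2
    · linarith [(tri p h').2.1]
    · linarith

/-- In the second triangle of `two_step`, the points at the height of `P` lie in a vertical strip
of width less than `1`. -/
lemma second_triangle {N η a κ j v : ℝ} (hN : 1 ≤ N) (hη : 16 * (N * η) = 1) (ha : -N ≤ a)
    (hv : v ≤ N) (hav : a + 1 ≤ v) (hκ : 0 ≤ κ) (hκη : κ ≤ η) (hj' : j ≤ η) (hj : -η ≤ j)
    {α β γ : ℝ} {p : ℝ × ℝ} (hp : IsCombo (a, -1) (v, -1) (a + κ, j) α β γ p) :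
    a ≤ p.1 ∧ -1 ≤ p.2 ∧ p.2 ≤ η ∧ (-η ≤ p.2 → p.1 < a + 1) := by
  have hη0 : 0 < η := by nlinarith
  have hη1 : 16 * η ≤ 1 := by nlinarith
  have hx := hp.x
  have hy := hp.y
  have hs := hp.sum
  have h1 := hp.ha
  have h2 := hp.hb
  have h3 := hp.hc
  simp only at hx hy
  refine ⟨by nlinarith, by nlinarith, by nlinarith, fun hp2 => ?_⟩
  have hγ1 : 1 - γ ≤ 2 * η := by nlinarith
  have hβ : β * (v - a) ≤ 2 * η * (2 * N) := by
    apply mul_le_mul <;> linarith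
  nlinarith

/-! ### The steps of the construction -/

lemma combo_le {α β γ x y z M : ℝ} (ha : 0 ≤ α) (hb : 0 ≤ β) (hc : 0 ≤ γ) (hs : α + β + γ = 1)
    (hx : x ≤ M) (hy : y ≤ M) (hz : z ≤ M) : α * x + β * y + γ * z ≤ M := by
  have h1 := mul_le_mul_of_nonneg_left hx ha
  have h2 := mul_le_mul_of_nonneg_left hy hb
  have h3 := mul_le_mul_of_nonneg_left hz hc
  have : α * M + β * M + γ * M = M := by rw [← add_mul, ← add_mul, hs, one_mul]
  linarith

lemma le_combo {α β γ x y z M : ℝ} (ha : 0 ≤ α) (hb : 0 ≤ β) (hc : 0 ≤ γ) (hs : α + β + γ = 1)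
    (hx : M ≤ x) (hy : M ≤ y) (hz : M ≤ z) : M ≤ α * x + β * y + γ * z := by
  have h1 := mul_le_mul_of_nonneg_left hx ha
  have h2 := mul_le_mul_of_nonneg_left hy hb
  have h3 := mul_le_mul_of_nonneg_left hz hc
  have : α * M + β * M + γ * M = M := by rw [← add_mul, ← add_mul, hs, one_mul]
  linarith

lemma IsCombo.x_le {A B Z p : ℝ × ℝ} {α β γ M : ℝ} (h : IsCombo A B Z α β γ p) (h1 : A.1 ≤ M)
    (h2 : B.1 ≤ M) (h3 : Z.1 ≤ M) : p.1 ≤ M :=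
  h.x ▸ combo_le h.ha h.hb h.hc h.sum h1 h2 h3

lemma IsCombo.y_le {A B Z p : ℝ × ℝ} {α β γ M : ℝ} (h : IsCombo A B Z α β γ p) (h1 : A.2 ≤ M)
    (h2 : B.2 ≤ M) (h3 : Z.2 ≤ M) : p.2 ≤ M :=
  h.y ▸ combo_le h.ha h.hb h.hc h.sum h1 h2 h3

lemma IsCombo.le_x {A B Z p : ℝ × ℝ} {α β γ M : ℝ} (h : IsCombo A B Z α β γ p) (h1 : M ≤ A.1)
    (h2 : M ≤ B.1) (h3 : M ≤ Z.1) : M ≤ p.1 :=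
  h.x ▸ le_combo h.ha h.hb h.hc h.sum h1 h2 h3

lemma IsCombo.le_y {A B Z p : ℝ × ℝ} {α β γ M : ℝ} (h : IsCombo A B Z α β γ p) (h1 : M ≤ A.2)
    (h2 : M ≤ B.2) (h3 : M ≤ Z.2) : M ≤ p.2 :=
  h.y ▸ le_combo h.ha h.hb h.hc h.sum h1 h2 h3

lemma IsCombo.lt_y {A B Z p : ℝ × ℝ} {α β γ M : ℝ} (h : IsCombo A B Z α β γ p) (hγ : 0 < γ)
    (h1 : M ≤ A.2) (h2 : M ≤ B.2) (h3 : M < Z.2) : M < p.2 := by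
  have e1 := mul_le_mul_of_nonneg_left h1 h.ha
  have e2 := mul_le_mul_of_nonneg_left h2 h.hb
  have e3 := mul_lt_mul_of_pos_left h3 hγ
  have : α * M + β * M + γ * M = M := by rw [← add_mul, ← add_mul, h.sum, one_mul]
  rw [h.y]
  linarith

lemma snd_le_of_first_triangle {N v a : ℝ} {p : ℝ × ℝ}
    (h : ∃ α β γ, IsCombo (v, -1) (N + 1, -2) (a, -1) α β γ p) : p.2 ≤ -1 := by
  obtain ⟨α, β, γ, h⟩ := h
  exact h.y_le le_rfl (by norm_num) le_rfl

lemma Normalized.eq_of_strip {P : Finset (ℝ × ℝ)} {N η ε : ℝ} (hP : Normalized P N η ε)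
    {p q : ℝ × ℝ} (hp : p ∈ P) (hq : q ∈ P) (h1 : p.1 ≤ q.1) (h2 : q.1 < p.1 + 1) : q = p := by
  by_contra hne
  have := hP.sep q hq p hp hne
  rw [abs_of_nonneg (by linarith)] at this
  linarith

lemma Normalized.eta_pos {P : Finset (ℝ × ℝ)} {N η ε : ℝ} (hP : Normalized P N η ε) :
    0 < η ∧ 16 * η ≤ 1 ∧ 20 * ε ≤ η := by
  have h1 := hP.one_le
  have h2 := hP.eta
  have h3 := hP.eps
  have h4 := hP.eps_nonneg
  refine ⟨by nlinarith, by nlinarith, by nlinarith⟩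

lemma Sweep.single {P : Finset (ℝ × ℝ)} {N η ε v u : ℝ} {D : Finset (ℝ × ℝ)} {m : ℕ}
    {w : Fin (m + 1) → ℝ × ℝ} (hP : Normalized P N η ε) (h : Sweep P N η v u D w) {q : ℝ × ℝ}
    (hq : q ∈ P) (hqv : q.1 + 1 ≤ v) (hqu : q.1 + 1 ≤ u) :
    ∃ w' : Fin (m + 2 + 1) → ℝ × ℝ, Sweep P N η q.1 u (insert q D) w' := by
  obtain ⟨hη, hη1, hε⟩ := hP.eta_pos
  have hN := hP.one_le
  have hqy := hP.y_ge q hq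
  have hqy' := hP.y_le q hq
  have hqx := hP.x_ge q hq
  have hε0 := hP.eps_nonneg
  obtain ⟨w', s', eb, et, e1, e2, keep, reg⟩ := two_step hP h (κ := 0) (j := q.2) hqx hqv hqu le_rfl
    hη.le (by linarith) (by linarith)
  refine ⟨w', s', eb, et, by linarith [h.hv], h.hu, ?_, ?_, ?_, ?_⟩
  · exact Finset.insert_subset hq h.sub
  · intro p hp
    rcases Finset.mem_insert.1 hp with rfl | hp
    · refine segment_subset_polyBoundary e1 ?_
      rw [add_zero]
      exact right_mem_segment ℝ _ _
    · exact keep p (h.mem p hp) (by linarith [hP.y_ge p (h.sub hp)])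
  · intro p hp hpr
    rw [Finset.mem_insert]
    have hpy := hP.y_ge p hp
    rcases reg p hpr with h' | h' | ⟨α, β, γ, h'⟩
    · exact Or.inr (h.only p hp h')
    · linarith [snd_le_of_first_triangle h']
    · obtain ⟨h1, -, -, h2⟩ := second_triangle hN hP.eta hqx h.hv hqv le_rfl hη.le (by linarith)
        (by linarith) h'
      exact Or.inl (hP.eq_of_strip hq hp h1 (h2 (by linarith)))
  · refine h.bounds.step (by linarith) hη (by linarith) (by linarith) ?_
    intro p hpr
    rcases reg p hpr with h' | h' | ⟨α, β, γ, h'⟩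
    · exact Or.inl h'
    · exact Or.inr (Or.inl h')
    · obtain ⟨h1, h2, h3, -⟩ := second_triangle hN hP.eta hqx h.hv hqv le_rfl hη.le (by linarith)
        (by linarith) h'
      exact Or.inr (Or.inr ⟨h1, h2, h3⟩)

/-- A finite family of reals has its nonzero members bounded away from zero. -/
lemma exists_small {ι : Type*} [DecidableEq ι] (P : Finset ι) (f : ι → ℝ) {b : ℝ} (hb : 0 < b) :
    ∃ κ : ℝ, 0 < κ ∧ κ ≤ b ∧ ∀ p ∈ P, f p ≠ 0 → κ < |f p| := by
  induction P using Finset.induction_on with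
  | empty => exact ⟨b, hb, le_rfl, by simp⟩
  | insert q P hq ih =>
    obtain ⟨κ, h0, h1, h2⟩ := ih
    by_cases hf : f q = 0
    · refine ⟨κ, h0, h1, fun p hp hfp => ?_⟩
      rcases Finset.mem_insert.1 hp with rfl | hp
      · exact absurd hf hfp
      · exact h2 p hp hfp
    · have hpos := abs_pos.2 hf
      refine ⟨min κ (|f q| / 2), by positivity, (min_le_left _ _).trans h1, fun p hp hfp => ?_⟩
      rcases Finset.mem_insert.1 hp with rfl | hp
      · exact (min_le_right _ _).trans_lt (by linarith)
      · exact (min_le_left _ _).trans_lt (h2 p hp hfp)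

/-- The thin triangle with vertices `(a, l)`, `(a + κ, j)`, `p₃` meets the second triangle of
`two_step` at most in its edge opposite to `p₃`: the line through `(a + κ, j)` and `p₃` separates
the two. -/
lemma thin_separation {N η ε a κ j l σ v α β γ α' β' γ' : ℝ} {p p₃ : ℝ × ℝ}
    (hη1 : 16 * η ≤ 1) (hκ : 0 < κ) (hκη : κ ≤ η / 4) (hε0 : 0 ≤ ε) (hσ1 : σ ≤ 2 * ε)
    (hσ2 : -(2 * ε) ≤ σ) (hεN : 20 * (N * ε) ≤ η) (hε : 20 * ε ≤ η) (hav : a + κ ≤ v)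
    (hvN : v - (a + κ) ≤ 2 * N) (h3 : a + κ + 1 ≤ p₃.1) (hj : -η ≤ j)
    (hjL : j = l + (σ - 1) * κ) (L3a : p₃.2 = l + σ * (p₃.1 - a))
    (hp : IsCombo (a, l) (a + κ, j) p₃ α β γ p) (hγ : 0 < γ)
    (hq : IsCombo (a, -1) (v, -1) (a + κ, j) α' β' γ' p) : False := by
  -- the slope `μ` of the separating line
  obtain ⟨μ, hμ⟩ : ∃ μ, μ * (p₃.1 - (a + κ)) = p₃.2 - j :=
    ⟨(p₃.2 - j) / (p₃.1 - (a + κ)), by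
      rw [div_mul_cancel₀]
      intro h0
      linarith⟩
  have hμσ : (μ - σ) * (p₃.1 - (a + κ)) = κ := by
    rw [sub_mul, hμ, hjL, L3a]
    ring
  have hμ0 : 0 < μ - σ := pos_of_mul_pos_left (hμσ ▸ hκ) (by linarith)
  have hμ1 : μ - σ ≤ κ := by
    have := mul_le_mul_of_nonneg_left (show 1 ≤ p₃.1 - (a + κ) by linarith) hμ0.le
    linarith
  have fp : p.2 - j - μ * (p.1 - (a + κ)) = α * (κ * (1 + (μ - σ))) := by
    have hα : β = 1 - α - γ := by linarith [hp.sum]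
    have hx := hp.x
    have hy := hp.y
    simp only at hx hy
    rw [hx, hy, hα]
    linear_combination (-γ) * hμ - α * hjL
  have fq : p.2 - j - μ * (p.1 - (a + κ)) =
      α' * (-1 - j + μ * κ) + β' * (-1 - j - μ * (v - (a + κ))) := by
    have hα : γ' = 1 - α' - β' := by linarith [hq.sum]
    have hx := hq.x
    have hy := hq.y
    simp only at hx hy
    rw [hx, hy, hα]
    ring
  have hμb : -η ≤ μ * (v - (a + κ)) := by
    have : -(2 * ε) * (v - (a + κ)) ≤ μ * (v - (a + κ)) :=
      mul_le_mul_of_nonneg_right (by linarith) (by linarith)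
    have : 2 * ε * (v - (a + κ)) ≤ 2 * ε * (2 * N) :=
      mul_le_mul_of_nonneg_left hvN (by linarith)
    linarith
  have hμc : μ * κ ≤ η := by
    have : μ * κ ≤ 1 * κ := mul_le_mul_of_nonneg_right (by linarith) hκ.le
    linarith
  have g0 : 0 ≤ α * (κ * (1 + (μ - σ))) :=
    mul_nonneg hp.ha (mul_nonneg hκ.le (by linarith))
  have ha' := hq.ha
  have hb' := hq.hb
  have k1 : α' * (-1 - j + μ * κ) ≤ α' * (-(1 / 2)) :=
    mul_le_mul_of_nonneg_left (by linarith) ha'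
  have k2 : β' * (-1 - j - μ * (v - (a + κ))) ≤ β' * (-(1 / 2)) :=
    mul_le_mul_of_nonneg_left (by linarith) hb'
  have z1 : α' = 0 := by linarith
  have z2 : β' = 0 := by linarith
  -- only the common vertex `(a + κ, j)` is left, which is too far left
  have g1 : γ' = 1 := by linarith [hq.sum]
  have hx' := hq.x
  simp only [z1, z2, g1] at hx' fq
  rw [fq] at fp
  have za : α = 0 := by
    have : κ * (1 + (μ - σ)) ≠ 0 := (mul_pos hκ (by linarith)).ne'
    have h0 : α * (κ * (1 + (μ - σ))) = 0 := by linarith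
    exact (mul_eq_zero.1 h0).resolve_right this
  have hx := hp.x
  have hβ : β = 1 - γ := by linarith [hp.sum]
  simp only at hx
  rw [za, hβ] at hx
  have : 0 < γ * (p₃.1 - (a + κ)) := mul_pos hγ (by linarith)
  linarith

set_option maxHeartbeats 1600000 in
/-- A step treating three points of which the leftmost lies below the line `ℓ` through the other
two. With `a` the abscissa of `p₁` and `J` the point of `ℓ` above `p₁`, the path `(a, -1), J, p₃`
passes through all three points; it returns through a vertex below `ℓ` and close to `J`, so that the
triangle bounded by `ℓ` is too thin to contain further points of `P`. -/
lemma Sweep.cap {P : Finset (ℝ × ℝ)} {N η ε v u : ℝ} {D : Finset (ℝ × ℝ)} {m : ℕ}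
    {w : Fin (m + 1) → ℝ × ℝ} (hP : Normalized P N η ε) (h : Sweep P N η v u D w)
    {p₁ p₂ p₃ : ℝ × ℝ} (h₁ : p₁ ∈ P) (h₂ : p₂ ∈ P) (h₃ : p₃ ∈ P) (h12 : p₁.1 + 1 ≤ p₂.1)
    (h23 : p₂.1 + 1 ≤ p₃.1) (h3v : p₃.1 + 1 ≤ v) (h3u : p₃.1 + 1 ≤ u)
    (hc : cross p₁ p₂ p₃ < 0) :
    ∃ w' : Fin (m + 4 + 1) → ℝ × ℝ, Sweep P N η p₁.1 u (insert p₁ (insert p₂ (insert p₃ D))) w' := by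
  obtain ⟨hη, hη1, hε⟩ := hP.eta_pos
  have hN := hP.one_le
  have hε0 := hP.eps_nonneg
  have hεN := hP.eps
  have hηN := hP.eta
  have hvN := h.hv
  have x1 := hP.x_ge p₁ h₁
  have y1 := hP.y_ge p₁ h₁
  have y1' := hP.y_le p₁ h₁
  have y2 := hP.y_ge p₂ h₂
  have y2' := hP.y_le p₂ h₂
  have y3 := hP.y_ge p₃ h₃
  have y3' := hP.y_le p₃ h₃
  set a := p₁.1 with ha
  -- the line `y = L x` through `p₂` and `p₃`, of slope `σ`
  obtain ⟨σ, hσ⟩ : ∃ σ, σ * (p₃.1 - p₂.1) = p₃.2 - p₂.2 :=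
    ⟨(p₃.2 - p₂.2) / (p₃.1 - p₂.1), by
      rw [div_mul_cancel₀]
      intro h0
      linarith⟩
  have hσ1 : σ ≤ 2 * ε := by
    by_contra! hcon
    have := mul_lt_mul hcon (show 1 ≤ p₃.1 - p₂.1 by linarith) one_pos (by linarith)
    linarith
  have hσ2 : -(2 * ε) ≤ σ := by
    by_contra! hcon
    have := mul_lt_mul (show 2 * ε < -σ by linarith) (show 1 ≤ p₃.1 - p₂.1 by linarith) one_pos
      (by linarith)
    linarith
  set L : ℝ → ℝ := fun x => p₃.2 + σ * (x - p₃.1) with hL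
  have L3 : L p₃.1 = p₃.2 := by simp [hL]
  have L2 : L p₂.1 = p₂.2 := by simp only [hL]; linarith
  have Lb : ∀ x, -N ≤ x → x ≤ p₃.1 → -(η / 2) ≤ L x ∧ L x ≤ η / 2 := by
    intro x hx hx'
    have b1 : σ * (p₃.1 - x) ≤ 2 * ε * (2 * N) := by
      have : σ * (p₃.1 - x) ≤ 2 * ε * (p₃.1 - x) := mul_le_mul_of_nonneg_right hσ1 (by linarith)
      have : 2 * ε * (p₃.1 - x) ≤ 2 * ε * (2 * N) :=
        mul_le_mul_of_nonneg_left (by linarith) (by linarith)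
      linarith
    have b2 : -(2 * ε * (2 * N)) ≤ σ * (p₃.1 - x) := by
      have : -(2 * ε) * (p₃.1 - x) ≤ σ * (p₃.1 - x) :=
        mul_le_mul_of_nonneg_right hσ2 (by linarith)
      have : 2 * ε * (p₃.1 - x) ≤ 2 * ε * (2 * N) :=
        mul_le_mul_of_nonneg_left (by linarith) (by linarith)
      linarith
    simp only [hL]
    constructor <;> linarith
  have hLa : p₁.2 < L a := by
    have e : (p₃.1 - p₂.1) * (L a - p₁.2) = - cross p₁ p₂ p₃ := by
      simp only [hL, cross, ha]
      linear_combination (p₁.1 - p₃.1) * hσ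
    by_contra! hcon
    have : (p₃.1 - p₂.1) * (L a - p₁.2) ≤ 0 :=
      mul_nonpos_of_nonneg_of_nonpos (by linarith) (by linarith)
    linarith
  obtain ⟨κ, hκ, hκη, hκP⟩ := exists_small P (fun p => p.2 - L p.1) (b := η / 4) (by linarith)
  have La := Lb a (by linarith) (by linarith)
  have Laκ := Lb (a + κ) (by linarith) (by linarith)
  set j := L (a + κ) - κ with hj
  have hjL : j = L a + (σ - 1) * κ := by
    simp only [hj, hL]
    ring
  obtain ⟨w₂, s₂, eb₂, et₂, e₂, f₂, keep₂, r₂⟩ := two_step hP h (κ := κ) (j := j) x1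
    (by linarith) (by linarith) hκ.le (by linarith) (by linarith) (by linarith)
  have old : ∀ p ∈ polyRegion w, -1 < p.2 → p.2 < 1 → p₃.1 + 1 ≤ p.1 := by
    intro p hp hp1 hp2
    rcases h.bounds.mid p hp hp1 hp2 with h' | h' <;> linarith
  -- the vertex `J`
  obtain ⟨w₃, s₃, k₃, e₃, f₃, r₃⟩ := insert_vertex s₂ e₂ (Z := (a, L a))
    (by
      simp only [cross]
      have : 0 < κ * (L a + 1) := mul_pos hκ (by linarith)
      intro h0
      ring_nf at h0
      linarith)
    (by
      intro α β γ p hp hγ hpr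
      have hcr := hp.cross_eq.2.2
      have hy1 : -1 < p.2 := hp.lt_y hγ le_rfl (by simp only; linarith) (by simp only; linarith)
      have hy2 : p.2 ≤ η := hp.y_le (by simp only; linarith) (by simp only; linarith)
        (by simp only; linarith)
      have hx1 : p.1 ≤ a + κ := hp.x_le (by simp only; linarith) le_rfl (by simp only; linarith)
      rcases r₂ p hpr with hr | hr | ⟨α', β', γ', hq⟩
      · linarith [old p hr hy1 (by linarith)]
      · linarith [snd_le_of_first_triangle hr]
      · have hq' := hq.swap.cross_eq.1
        have hβ := hq.hb
        simp only [cross] at hcr hq'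
        have a1 : 0 < γ * (κ * (L a + 1)) := mul_pos hγ (mul_pos hκ (by linarith))
        have a2 : 0 ≤ β' * ((v - a) * (j + 1)) :=
          mul_nonneg hβ (mul_nonneg (by linarith) (by linarith))
        ring_nf at hcr hq' a1 a2
        linarith)
  -- the vertex `p₃`
  have tri3 : ∀ p : ℝ × ℝ, (∃ α β γ, IsCombo (a, -1) (a + κ, j) (a, L a) α β γ p) →
      a ≤ p.1 ∧ p.1 ≤ a + κ ∧ -1 ≤ p.2 ∧ p.2 ≤ η ∧ p.2 - L a - (σ - 1) * (p.1 - a) ≤ 0 := by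
    rintro p ⟨α, β, γ, hp⟩
    have hx := hp.x
    have hy := hp.y
    have hs := hp.sum
    simp only at hx hy
    refine ⟨hp.le_x le_rfl ?_ le_rfl, hp.x_le ?_ le_rfl ?_, hp.le_y le_rfl ?_ ?_,
      hp.y_le ?_ ?_ ?_, ?_⟩
    any_goals linarith
    have e : p.2 - L a - (σ - 1) * (p.1 - a) = α * (-1 - L a) := by
      have hα : γ = 1 - β - α := by linarith
      rw [hx, hy, hα, hjL]
      ring
    rw [e]
    exact mul_nonpos_of_nonneg_of_nonpos hp.ha (by linarith)
  have L3a : p₃.2 = L a + σ * (p₃.1 - a) := by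
    simp only [hL]
    ring
  have tri4 : ∀ α β γ (p : ℝ × ℝ), IsCombo (a, L a) (a + κ, j) p₃ α β γ p →
      a ≤ p.1 ∧ p.1 ≤ p₃.1 ∧ -η ≤ p.2 ∧ p.2 ≤ η ∧ p.2 - L p.1 = - (β * κ) ∧
      p.2 - L a - (σ - 1) * (p.1 - a) = γ * (p₃.1 - a) := by
    intro α β γ p hp
    have hx := hp.x
    have hy := hp.y
    have hs := hp.sum
    simp only at hx hy
    have hα : α = 1 - β - γ := by linarith
    refine ⟨hp.le_x le_rfl ?_ ?_, hp.x_le ?_ ?_ le_rfl, hp.le_y ?_ ?_ ?_, hp.y_le ?_ ?_ ?_, ?_, ?_⟩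
    iterate 10 linarith
    · rw [hy, hx, hjL, hα]
      simp only [hL]
      ring
    · rw [hy, hx, hjL, hα, L3a]
      ring
  obtain ⟨w₄, s₄, k₄, e₄, f₄, r₄⟩ := insert_vertex s₃ (A := (a, L a)) (B := (a + κ, j))
    (Sym2.eq_swap ▸ f₃) (Z := p₃)
    (by
      have e : cross (a, L a) (a + κ, j) p₃ = κ * (p₃.1 - a) := by
        simp only [cross, hjL, L3a]
        ring
      rw [e]
      exact (mul_pos hκ (by linarith)).ne')
    (by
      intro α β γ p hp hγ hpr
      obtain ⟨t1, t2, t3, t4, -, t6⟩ := tri4 α β γ p hp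
      have hpos : 0 < γ * (p₃.1 - a) := mul_pos hγ (by linarith)
      rcases r₃ p hpr with hr | hr
      · rcases r₂ p hr with hr | hr | ⟨α', β', γ', hq⟩
        · linarith [old p hr (by linarith) (by linarith)]
        · linarith [snd_le_of_first_triangle hr]
        · exact thin_separation (N := N) hη1 hκ hκη hε0 hσ1 hσ2 (by linarith) (by linarith)
            (by linarith) (by linarith) (by linarith) (by linarith) hjL L3a hp hγ hq
      · linarith [(tri3 p hr).2.2.2.2])
  have keep4 : ∀ p ∈ polyBoundary w₂, -1 < p.2 → a + κ < p.1 → p ∈ polyBoundary w₄ := by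
    intro p hp hp1 hp2
    refine mem_polyBoundary_of_edges k₄ (mem_polyBoundary_of_edges k₃ hp ?_) ?_
    · intro hs
      obtain ⟨t, h0, h1, h2, -⟩ := exists_of_mem_segment hs
      simp only at h2
      linarith [mul_le_of_le_one_left hκ.le h1]
    · intro hs
      obtain ⟨t, h0, h1, h2, -⟩ := exists_of_mem_segment hs
      simp only at h2
      linarith [mul_le_of_le_one_left hκ.le h1]
  refine ⟨w₄, s₄, ?_, ?_, by linarith, h.hu, ?_, ?_, ?_, ?_⟩
  · refine k₄ _ (k₃ _ eb₂ (sym2_ne' ?_ ?_)) (sym2_ne' ?_ ?_)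
    all_goals
      simp only [ne_eq, Prod.ext_iff, not_and]
      intro _
      linarith
  · refine k₄ _ (k₃ _ et₂ (sym2_ne ?_ ?_)) (sym2_ne ?_ ?_)
    all_goals
      simp only [ne_eq, Prod.ext_iff, not_and]
      intro _
      linarith
  · exact Finset.insert_subset h₁ (Finset.insert_subset h₂ (Finset.insert_subset h₃ h.sub))
  · intro p hp
    simp only [Finset.mem_insert] at hp
    rcases hp with rfl | rfl | rfl | hp
    · have hVJ : s((a, -1), (a, L a)) ∈ polyEdges w₄ := by
        refine k₄ _ e₃ (sym2_ne ?_ ?_) <;>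
        · simp only [ne_eq, Prod.ext_iff, not_and]
          intro _
          linarith
      refine segment_subset_polyBoundary hVJ
        (mem_segment_of (t := (p.2 + 1) / (L a + 1)) ?_ ?_ ?_ ?_)
      · exact div_nonneg (by linarith) (by linarith)
      · rw [div_le_one (by linarith)]
        linarith
      · simp [ha]
      · have : L a + 1 ≠ 0 := by linarith
        simp only
        field_simp
        ring
    · have hne : p₃.1 - a ≠ 0 := by linarith
      refine segment_subset_polyBoundary e₄
        (mem_segment_of (t := (p.1 - a) / (p₃.1 - a)) ?_ ?_ ?_ ?_)
      · exact div_nonneg (by linarith) (by linarith)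
      · rw [div_le_one (by linarith)]
        linarith
      · simp only
        field_simp
        ring
      · have e : (p.1 - a) / (p₃.1 - a) * (p₃.2 - L a) = σ * (p.1 - a) := by
          rw [L3a]
          field_simp
          ring
        simp only
        rw [e, ← L2]
        simp only [hL]
        ring
    · exact segment_subset_polyBoundary e₄ (right_mem_segment ℝ _ _)
    · have b1 := h.mem p hp
      have b2 := hP.y_ge p (h.sub hp)
      have b3 := hP.y_le p (h.sub hp)
      have b4 := old p (Or.inl b1) (by linarith) (by linarith)
      exact keep4 p (keep₂ p b1 (by linarith)) (by linarith) (by linarith)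
  · intro p hp hpr
    simp only [Finset.mem_insert]
    have hpy := hP.y_ge p hp
    have first : a ≤ p.1 → p.1 < a + 1 → p = p₁ := fun h1 h2 => hP.eq_of_strip h₁ hp h1 h2
    rcases r₄ p hpr with hr | ⟨α, β, γ, hr⟩
    · rcases r₃ p hr with hr | hr
      · rcases r₂ p hr with hr | hr | ⟨α, β, γ, hr⟩
        · exact Or.inr (Or.inr (Or.inr (h.only p hp hr)))
        · linarith [snd_le_of_first_triangle hr]
        · obtain ⟨g1, -, -, g2⟩ := second_triangle hN hηN x1 hvN (by linarith) hκ.le (by linarith)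
            (by linarith) (by linarith) hr
          exact Or.inl (first g1 (g2 (by linarith)))
      · obtain ⟨g1, g2, -⟩ := tri3 p hr
        exact Or.inl (first g1 (by linarith))
    · obtain ⟨-, -, -, -, g, -⟩ := tri4 α β γ p hr
      by_cases hp0 : p.2 - L p.1 = 0
      · -- a point of `P` on the line through `p₂` and `p₃` is one of these two
        right
        by_contra! hcon
        refine hP.gp p hp p₂ h₂ p₃ h₃ hcon.1 hcon.2.1 (fun h0 => ?_) ?_
        · rw [h0] at h23
          linarith
        · simp only [cross]
          have e1 : p.2 = p₃.2 + σ * (p.1 - p₃.1) := by linarith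
          have e2 : p₂.2 = p₃.2 + σ * (p₂.1 - p₃.1) := by linarith
          rw [e1, e2]
          ring
      · have := hκP p hp hp0
        rw [g, abs_neg, abs_of_nonneg (mul_nonneg hr.hb hκ.le)] at this
        have hβ : β ≤ 1 := by linarith [hr.sum, hr.ha, hr.hc]
        linarith [mul_le_of_le_one_left hκ.le hβ]
  · refine h.bounds.step (by linarith) hη (by linarith) (by linarith) ?_
    intro p hpr
    rcases r₄ p hpr with hr | ⟨α, β, γ, hr⟩
    · rcases r₃ p hr with hr | hr
      · rcases r₂ p hr with hr | hr | ⟨α, β, γ, hr⟩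
        · exact Or.inl hr
        · exact Or.inr (Or.inl hr)
        · obtain ⟨g1, g2, g3, -⟩ := second_triangle hN hηN x1 hvN (by linarith) hκ.le (by linarith)
            (by linarith) (by linarith) hr
          exact Or.inr (Or.inr ⟨g1, g2, g3⟩)
      · obtain ⟨g1, -, g2, g3, -⟩ := tri3 p hr
        exact Or.inr (Or.inr ⟨g1, g2, g3⟩)
    · obtain ⟨g1, -, g2, g3, -⟩ := tri4 α β γ p hr
      exact Or.inr (Or.inr ⟨g1, by linarith, g3⟩)

lemma Normalized.flip {P : Finset (ℝ × ℝ)} {N η ε : ℝ} (hP : Normalized P N η ε) :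
    Normalized (P.image yFlip) N η ε := by
  refine ⟨hP.one_le, hP.eta, hP.eps_nonneg, hP.eps, ?_, ?_, ?_, ?_, ?_, ?_⟩
  · intro p hp
    obtain ⟨q, hq, rfl⟩ := Finset.mem_image.1 hp
    rw [yFlip_apply]
    exact hP.x_ge q hq
  · intro p hp
    obtain ⟨q, hq, rfl⟩ := Finset.mem_image.1 hp
    rw [yFlip_apply]
    exact hP.x_le q hq
  · intro p hp
    obtain ⟨q, hq, rfl⟩ := Finset.mem_image.1 hp
    have := hP.y_le q hq
    rw [yFlip_apply]
    simp only
    linarith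
  · intro p hp
    obtain ⟨q, hq, rfl⟩ := Finset.mem_image.1 hp
    have := hP.y_ge q hq
    rw [yFlip_apply]
    simp only
    linarith
  · intro p hp q hq hpq
    obtain ⟨p, hp', rfl⟩ := Finset.mem_image.1 hp
    obtain ⟨q, hq', rfl⟩ := Finset.mem_image.1 hq
    simpa [yFlip_apply] using hP.sep p hp' q hq' (fun h => hpq (by rw [h]))
  · intro p hp q hq r hr hpq hpr hqr
    obtain ⟨p, hp', rfl⟩ := Finset.mem_image.1 hp
    obtain ⟨q, hq', rfl⟩ := Finset.mem_image.1 hq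
    obtain ⟨r, hr', rfl⟩ := Finset.mem_image.1 hr
    have := hP.gp p hp' q hq' r hr' (fun h => hpq (by rw [h])) (fun h => hpr (by rw [h]))
      (fun h => hqr (by rw [h]))
    intro h0
    apply this
    simp only [cross, yFlip_apply] at h0 ⊢
    linarith

lemma Sweep.flip {P : Finset (ℝ × ℝ)} {N η v u : ℝ} {D : Finset (ℝ × ℝ)} {m : ℕ}
    {w : Fin (m + 1) → ℝ × ℝ} (h : Sweep P N η v u D w) :
    Sweep (P.image yFlip) N η u v (D.image yFlip) (fun i => yFlip (w i)) := by
  have reg : ∀ p ∈ polyRegion (fun i => yFlip (w i)), ∃ q ∈ polyRegion w, p = (q.1, -q.2) := by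
    intro p hp
    refine ⟨yFlip p, ?_, ?_⟩
    · rw [← mem_polyRegion_map w yFlip, yFlip_yFlip]
      exact hp
    · rw [yFlip_apply]
      simp
  refine ⟨h.simple.map yFlip, ?_, ?_, h.hu, h.hv, Finset.image_subset_image h.sub, ?_, ?_, ?_⟩
  · have := mem_polyEdges_map yFlip h.et
    simpa [yFlip_apply] using this
  · have := mem_polyEdges_map yFlip h.eb
    simpa [yFlip_apply] using this
  · intro p hp
    obtain ⟨q, hq, rfl⟩ := Finset.mem_image.1 hp
    rw [polyBoundary_map]
    exact Set.mem_image_of_mem _ (h.mem q hq)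
  · intro p hp hpr
    obtain ⟨q, hq, rfl⟩ := Finset.mem_image.1 hp
    rw [mem_polyRegion_map] at hpr
    exact Finset.mem_image_of_mem _ (h.only q hq hpr)
  · have b := h.bounds
    refine ⟨?_, ?_, ?_, ?_, ?_, ?_, ?_⟩
    all_goals
      intro p hp
      obtain ⟨q, hq, rfl⟩ := reg p hp
      simp only
    · linarith [b.hi q hq]
    · linarith [b.lo q hq]
    · intro h1
      linarith [b.top q hq (by linarith)]
    · intro h1
      linarith [b.bot q hq (by linarith)]
    · intro h1 h2
      exact (b.mid q hq (by linarith) (by linarith)).symm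
    · intro h1 h2
      exact b.high q hq (by linarith) (by linarith)
    · intro h1 h2
      exact b.low q hq (by linarith) (by linarith)

lemma image_yFlip_image (P : Finset (ℝ × ℝ)) : (P.image yFlip).image yFlip = P := by
  rw [Finset.image_image]
  have e : (yFlip ∘ yFlip : ℝ × ℝ → ℝ × ℝ) = id := funext yFlip_yFlip
  rw [e, Finset.image_id]

/-- Three points cost four vertices: either `Sweep.cap` applies, or its mirror image. -/
lemma Sweep.triple {P : Finset (ℝ × ℝ)} {N η ε v u : ℝ} {D : Finset (ℝ × ℝ)} {m : ℕ}
    {w : Fin (m + 1) → ℝ × ℝ} (hP : Normalized P N η ε) (h : Sweep P N η v u D w)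
    {p₁ p₂ p₃ : ℝ × ℝ} (h₁ : p₁ ∈ P) (h₂ : p₂ ∈ P) (h₃ : p₃ ∈ P) (h12 : p₁.1 + 1 ≤ p₂.1)
    (h23 : p₂.1 + 1 ≤ p₃.1) (h3v : p₃.1 + 1 ≤ v) (h3u : p₃.1 + 1 ≤ u) :
    ∃ v' u' : ℝ, p₁.1 ≤ v' ∧ p₁.1 ≤ u' ∧ ∃ w' : Fin (m + 4 + 1) → ℝ × ℝ,
      Sweep P N η v' u' (insert p₁ (insert p₂ (insert p₃ D))) w' := by
  have hc : cross p₁ p₂ p₃ ≠ 0 := by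
    refine hP.gp p₁ h₁ p₂ h₂ p₃ h₃ ?_ ?_ ?_ <;>
    · rintro rfl
      linarith
  rcases hc.lt_or_gt with hc | hc
  · obtain ⟨w', h'⟩ := h.cap hP h₁ h₂ h₃ h12 h23 h3v h3u hc
    exact ⟨p₁.1, u, le_rfl, by linarith, w', h'⟩
  · obtain ⟨w', h'⟩ := h.flip.cap hP.flip (Finset.mem_image_of_mem yFlip h₁)
      (Finset.mem_image_of_mem yFlip h₂) (Finset.mem_image_of_mem yFlip h₃)
      (by simpa [yFlip_apply] using h12) (by simpa [yFlip_apply] using h23)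
      (by simpa [yFlip_apply] using h3u) (by simpa [yFlip_apply] using h3v)
      (by
        simp only [cross, yFlip_apply] at hc ⊢
        linarith)
    have h2 := h'.flip
    rw [image_yFlip_image, ← Finset.image_insert, ← Finset.image_insert, ← Finset.image_insert,
      image_yFlip_image] at h2
    refine ⟨v, (yFlip p₁).1, by linarith, by simp [yFlip_apply], _, h2⟩

/-- All points of `S` are treated from right to left, in groups of three as long as possible. -/
lemma Sweep.run {P : Finset (ℝ × ℝ)} {N η ε : ℝ} (hP : Normalized P N η ε) (n : ℕ) :
    ∀ {S D : Finset (ℝ × ℝ)} {v u : ℝ} {m : ℕ} {w : Fin (m + 1) → ℝ × ℝ},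
      S.card = n → S ⊆ P → Sweep P N η v u D w → (∀ q ∈ S, q.1 + 1 ≤ v ∧ q.1 + 1 ≤ u) →
      ∃ (m' : ℕ) (v' u' : ℝ) (w' : Fin (m' + 1) → ℝ × ℝ), Sweep P N η v' u' (S ∪ D) w' ∧
        m' ≤ m + 4 * (n / 3) + 2 * (n % 3) := by
  induction n using Nat.strong_induction_on with
  | _ n ih =>
  intro S D v u m w hn hS h hq
  -- the rightmost point of a set, at distance at least one from the remaining ones
  have rightmost : ∀ T : Finset (ℝ × ℝ), T ⊆ S → 0 < T.card → ∃ q ∈ T,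
      ∀ r ∈ T.erase q, r.1 + 1 ≤ q.1 := by
    intro T hT hcard
    obtain ⟨q, hqT, hmax⟩ := Finset.exists_max_image T (fun p => p.1) (Finset.card_pos.1 hcard)
    refine ⟨q, hqT, fun r hr => ?_⟩
    obtain ⟨hne, hrT⟩ := Finset.mem_erase.1 hr
    have h1 := hP.sep q (hS (hT hqT)) r (hS (hT hrT)) (Ne.symm hne)
    have h2 := hmax r hrT
    rw [abs_of_nonneg (by linarith)] at h1
    linarith
  rcases Nat.eq_zero_or_pos n with rfl | hpos
  · rw [Finset.card_eq_zero] at hn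
    exact ⟨m, v, u, w, by simpa [hn] using h, by omega⟩
  obtain ⟨p, hpS, hp⟩ := rightmost S subset_rfl (by omega)
  have c1 : (S.erase p).card = n - 1 := by rw [Finset.card_erase_of_mem hpS, hn]
  have s1 : S.erase p ⊆ S := Finset.erase_subset _ _
  by_cases h3 : n < 3
  · obtain ⟨w', h'⟩ := h.single hP (hS hpS) (hq p hpS).1 (hq p hpS).2
    obtain ⟨m', v', u', w'', hrun, hm⟩ := ih (n - 1) (by omega) c1 (s1.trans hS) h' (fun q hqS =>
      ⟨hp q hqS, (hq q (s1 hqS)).2⟩)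
    refine ⟨m', v', u', w'', ?_, by omega⟩
    have e : S.erase p ∪ insert p D = S ∪ D := by
      rw [Finset.union_insert, ← Finset.insert_union, Finset.insert_erase hpS]
    rwa [e] at hrun
  · obtain ⟨p₂, hp₂S, hp₂⟩ := rightmost (S.erase p) s1 (by omega)
    have c2 : ((S.erase p).erase p₂).card = n - 2 := by
      rw [Finset.card_erase_of_mem hp₂S, c1]
      omega
    have s2 : (S.erase p).erase p₂ ⊆ S.erase p := Finset.erase_subset _ _
    obtain ⟨p₁, hp₁S, hp₁⟩ := rightmost _ (s2.trans s1) (by omega)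
    have c3 : (((S.erase p).erase p₂).erase p₁).card = n - 3 := by
      rw [Finset.card_erase_of_mem hp₁S, c2]
      omega
    have s3 : ((S.erase p).erase p₂).erase p₁ ⊆ S :=
      (Finset.erase_subset _ _).trans (s2.trans s1)
    obtain ⟨v₁, u₁, hv₁, hu₁, w', h'⟩ := h.triple hP (hS (s1 (s2 hp₁S))) (hS (s1 hp₂S)) (hS hpS)
      (hp₂ p₁ hp₁S) (hp p₂ hp₂S) (hq p hpS).1 (hq p hpS).2
    obtain ⟨m', v', u', w'', hrun, hm⟩ := ih (n - 3) (by omega) c3 (s3.trans hS) h' (fun q hqS =>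
      ⟨(hp₁ q hqS).trans hv₁, (hp₁ q hqS).trans hu₁⟩)
    refine ⟨m', v', u', w'', ?_, by omega⟩
    have e : ((S.erase p).erase p₂).erase p₁ ∪ insert p₁ (insert p₂ (insert p D)) = S ∪ D := by
      rw [Finset.union_insert, ← Finset.insert_union, Finset.insert_erase hp₁S,
        Finset.union_insert, ← Finset.insert_union, Finset.insert_erase hp₂S,
        Finset.union_insert, ← Finset.insert_union, Finset.insert_erase hpS]
    rwa [e] at hrun

/-! ### The initial polygon -/

/-- A half-plane containing the vertices contains the closed region. -/
lemma le_of_mem_polyRegion {m : ℕ} {w : Fin (m + 1) → ℝ × ℝ} {α β c : ℝ} (hne : α ≠ 0 ∨ β ≠ 0)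
    (h : ∀ i, c ≤ α * (w i).1 + β * (w i).2) {p : ℝ × ℝ} (hp : p ∈ polyRegion w) :
    c ≤ α * p.1 + β * p.2 := by
  by_contra! hcon
  have hlin : IsLinearMap ℝ (fun q : ℝ × ℝ => α * q.1 + β * q.2) :=
    ⟨fun x y => by simp only [Prod.fst_add, Prod.snd_add]; ring,
      fun a x => by simp only [Prod.smul_fst, Prod.smul_snd, smul_eq_mul]; ring⟩
  refine not_mem_polyRegion_of_unbounded (C := {q : ℝ × ℝ | α * q.1 + β * q.2 < c})
    (convex_halfSpace_lt hlin c).isPreconnected ?_ ?_ hcon hp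
  · refine not_isBounded_of_forall fun R => ?_
    have mem : ∀ t : ℝ, 0 ≤ t → ((p.1 - t * α, p.2 - t * β) : ℝ × ℝ) ∈
        {q : ℝ × ℝ | α * q.1 + β * q.2 < c} := by
      intro t ht
      have : 0 ≤ t * (α ^ 2 + β ^ 2) := by positivity
      simp only [Set.mem_ofPred_eq]
      linarith
    rcases hne with h0 | h0
    · refine ⟨_, mem ((|R| + |p.1| + 1) / |α|) (by positivity), ?_⟩
      have ha := abs_pos.2 h0
      have e : (|R| + |p.1| + 1) / |α| * |α| = |R| + |p.1| + 1 := div_mul_cancel₀ _ ha.ne'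
      have := le_abs_self R
      have := abs_le.1 (le_refl |p.1|)
      rcases abs_cases α with ⟨h1, -⟩ | ⟨h1, -⟩
      · right; right; left
        rw [h1] at e
        simp only [h1, e]
        linarith
      · left
        rw [h1] at e
        simp only [h1]
        linarith
    · refine ⟨_, mem ((|R| + |p.2| + 1) / |β|) (by positivity), ?_⟩
      have ha := abs_pos.2 h0
      have e : (|R| + |p.2| + 1) / |β| * |β| = |R| + |p.2| + 1 := div_mul_cancel₀ _ ha.ne'
      have := le_abs_self R
      have := abs_le.1 (le_refl |p.2|)
      rcases abs_cases β with ⟨h1, -⟩ | ⟨h1, -⟩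
      · right; right; right
        rw [h1] at e
        simp only [h1, e]
        linarith
      · right; left
        rw [h1] at e
        simp only [h1]
        linarith
  · intro q hq hqb
    obtain ⟨i, hi⟩ := Set.mem_iUnion.1 hqb
    have hsub : segment ℝ (w i) (w (i + 1)) ⊆ {q : ℝ × ℝ | c ≤ α * q.1 + β * q.2} :=
      (convex_halfSpace_ge hlin c).segment_subset (h i) (h (i + 1))
    have h1 : c ≤ α * q.1 + β * q.2 := hsub hi
    have h2 : α * q.1 + β * q.2 < c := hq
    linarith

/-- The polygon from which the construction starts: a trapezoid to the right of all points. -/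
def trapezoid (N : ℝ) : Fin (3 + 1) → ℝ × ℝ := ![(N, -1), (N + 1, -2), (N + 1, 2), (N, 1)]

lemma trapezoid_simple (N : ℝ) : IsSimplePolygon (trapezoid N) := by
  have v0 : trapezoid N 0 = (N, -1) := rfl
  have v1 : trapezoid N 1 = (N + 1, -2) := rfl
  have v2 : trapezoid N 2 = (N + 1, 2) := rfl
  have v3 : trapezoid N 3 = (N, 1) := rfl
  have e0 : ∀ p ∈ cycleEdge (trapezoid N) 0, p.1 + p.2 = N - 1 ∧ -2 ≤ p.2 ∧ p.2 ≤ -1 := by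
    intro p hp
    obtain ⟨t, h0, h1, hx, hy⟩ :=
      exists_of_mem_segment (show p ∈ segment ℝ ((N, -1) : ℝ × ℝ) (N + 1, -2) from hp)
    simp only at hx hy
    refine ⟨by linarith, by linarith, by linarith⟩
  have e1 : ∀ p ∈ cycleEdge (trapezoid N) 1, p.1 = N + 1 ∧ -2 ≤ p.2 ∧ p.2 ≤ 2 := by
    intro p hp
    obtain ⟨t, h0, h1, hx, hy⟩ :=
      exists_of_mem_segment (show p ∈ segment ℝ ((N + 1, -2) : ℝ × ℝ) (N + 1, 2) from hp)
    simp only at hx hy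
    refine ⟨by linarith, by linarith, by linarith⟩
  have e2 : ∀ p ∈ cycleEdge (trapezoid N) 2, p.1 - p.2 = N - 1 ∧ 1 ≤ p.2 ∧ p.2 ≤ 2 := by
    intro p hp
    obtain ⟨t, h0, h1, hx, hy⟩ :=
      exists_of_mem_segment (show p ∈ segment ℝ ((N + 1, 2) : ℝ × ℝ) (N, 1) from hp)
    simp only at hx hy
    refine ⟨by linarith, by linarith, by linarith⟩
  have e3 : ∀ p ∈ cycleEdge (trapezoid N) 3, p.1 = N ∧ -1 ≤ p.2 ∧ p.2 ≤ 1 := by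
    intro p hp
    obtain ⟨t, h0, h1, hx, hy⟩ :=
      exists_of_mem_segment (show p ∈ segment ℝ ((N, 1) : ℝ × ℝ) (N, -1) from hp)
    simp only at hx hy
    refine ⟨by linarith, by linarith, by linarith⟩
  have c01 : ∀ p ∈ cycleEdge (trapezoid N) 0, p ∈ cycleEdge (trapezoid N) 1 →
      p = trapezoid N 1 := fun p h h' => by
    have := e0 p h
    have := e1 p h'
    rw [v1]; exact Prod.ext (by simp only; linarith) (by simp only; linarith)
  have c12 : ∀ p ∈ cycleEdge (trapezoid N) 1, p ∈ cycleEdge (trapezoid N) 2 →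
      p = trapezoid N 2 := fun p h h' => by
    have := e1 p h
    have := e2 p h'
    rw [v2]; exact Prod.ext (by simp only; linarith) (by simp only; linarith)
  have c23 : ∀ p ∈ cycleEdge (trapezoid N) 2, p ∈ cycleEdge (trapezoid N) 3 →
      p = trapezoid N 3 := fun p h h' => by
    have := e2 p h
    have := e3 p h'
    rw [v3]; exact Prod.ext (by simp only; linarith) (by simp only; linarith)
  have c30 : ∀ p ∈ cycleEdge (trapezoid N) 3, p ∈ cycleEdge (trapezoid N) 0 →
      p = trapezoid N 0 := fun p h h' => by
    have := e3 p h
    have := e0 p h'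
    rw [v0]; exact Prod.ext (by simp only; linarith) (by simp only; linarith)
  have c02 : ∀ p ∈ cycleEdge (trapezoid N) 0, p ∉ cycleEdge (trapezoid N) 2 := fun p h h' => by
    linarith [e0 p h, e2 p h']
  have c13 : ∀ p ∈ cycleEdge (trapezoid N) 1, p ∉ cycleEdge (trapezoid N) 3 := fun p h h' => by
    linarith [e1 p h, e3 p h']
  refine ⟨by norm_num, ?_, (isNoncrossingCycle_iff (by norm_num)).2 ?_⟩
  · intro i j hij
    have h1 := congrArg Prod.fst hij
    have h2 := congrArg Prod.snd hij
    fin_cases i <;> fin_cases j <;> simp [trapezoid] at h1 h2 ⊢ <;> norm_num at h2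
  · intro i j hij p hi hj
    fin_cases i <;> fin_cases j
    · exact absurd rfl hij
    · exact Or.inl ⟨rfl, c01 p hi hj⟩
    · exact absurd hj (c02 p hi)
    · exact Or.inr ⟨rfl, c30 p hj hi⟩
    · exact Or.inr ⟨rfl, c01 p hj hi⟩
    · exact absurd rfl hij
    · exact Or.inl ⟨rfl, c12 p hi hj⟩
    · exact absurd hj (c13 p hi)
    · exact absurd hi (c02 p hj)
    · exact Or.inr ⟨rfl, c12 p hj hi⟩
    · exact absurd rfl hij
    · exact Or.inl ⟨rfl, c23 p hi hj⟩
    · exact Or.inl ⟨rfl, c30 p hi hj⟩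
    · exact absurd hi (c13 p hj)
    · exact Or.inr ⟨rfl, c23 p hj hi⟩
    · exact absurd rfl hij

lemma Sweep.start {P : Finset (ℝ × ℝ)} {N η ε : ℝ} (hP : Normalized P N η ε) :
    Sweep P N η N N ∅ (trapezoid N) := by
  have half : ∀ α β c : ℝ, (α ≠ 0 ∨ β ≠ 0) → c ≤ α * N + β * (-1) → c ≤ α * (N + 1) + β * (-2) →
      c ≤ α * (N + 1) + β * 2 → c ≤ α * N + β * 1 → ∀ p ∈ polyRegion (trapezoid N),
      c ≤ α * p.1 + β * p.2 := by
    intro α β c hne h0 h1 h2 h3 p hp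
    refine le_of_mem_polyRegion hne (fun i => ?_) hp
    fin_cases i
    · exact h0
    · exact h1
    · exact h2
    · exact h3
  have left := half 1 0 N (by norm_num) (by linarith) (by linarith) (by linarith) (by linarith)
  have lo := half 0 1 (-2) (by norm_num) (by linarith) (by linarith) (by linarith) (by linarith)
  have hi := half 0 (-1) (-2) (by norm_num) (by linarith) (by linarith) (by linarith) (by linarith)
  have bot := half 1 1 (N - 1) (by norm_num) (by linarith) (by linarith) (by linarith) (by linarith)
  have top := half 1 (-1) (N - 1) (by norm_num) (by linarith) (by linarith) (by linarith)
    (by linarith)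
  refine ⟨trapezoid_simple N, ⟨0, rfl⟩, ⟨2, Sym2.eq_swap⟩, le_rfl, le_rfl, Finset.empty_subset _,
    by simp, ?_, ?_, ?_, ?_, ?_, ?_, ?_, ?_⟩
  · intro p hp hpr
    linarith [left p hpr, hP.x_le p hp]
  · intro p hp
    linarith [lo p hp]
  · intro p hp
    linarith [hi p hp]
  · intro p hp _
    linarith [bot p hp]
  · intro p hp _
    linarith [top p hp]
  · intro p hp _ _
    left
    linarith [left p hp]
  · intro p hp _ _
    linarith [left p hp]
  · intro p hp _ _
    linarith [left p hp]

/-! ### Normalisation -/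

/-- Points in general position can be normalised: a generic shear makes the abscissas distinct, after
which the axes are rescaled. -/
lemma exists_normalization (P : Finset (ℝ × ℝ))
    (hgp : ∀ p ∈ P, ∀ q ∈ P, ∀ r ∈ P, p ≠ q → p ≠ r → q ≠ r →
      ¬ Collinear ℝ ({p, q, r} : Set (ℝ × ℝ))) :
    ∃ (e : (ℝ × ℝ) ≃L[ℝ] (ℝ × ℝ)) (N η ε : ℝ), Normalized (P.image e) N η ε := by
  obtain ⟨t, ht⟩ := Infinite.exists_notMem_finset
    ((P ×ˢ P).image fun z => -((z.1.1 - z.2.1) / (z.1.2 - z.2.2)))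
  have ht' : ∀ p ∈ P, ∀ q ∈ P, p ≠ q → (p.1 + t * p.2) - (q.1 + t * q.2) ≠ 0 := by
    intro p hp q hq hpq h0
    by_cases hy : p.2 - q.2 = 0
    · refine hpq (Prod.ext ?_ (by linarith))
      have : p.2 = q.2 := by linarith
      rw [this] at h0
      linarith
    · refine ht (Finset.mem_image.2 ⟨(p, q), Finset.mk_mem_product hp hq, ?_⟩)
      simp only
      rw [← neg_div, div_eq_iff hy]
      linarith
  obtain ⟨κ, hκ, -, hκP⟩ := exists_small (P ×ˢ P)
    (fun z => (z.1.1 + t * z.1.2) - (z.2.1 + t * z.2.2)) one_pos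
  set f : ℝ × ℝ → ℝ := fun p => κ⁻¹ * (p.1 + t * p.2) with hf
  have hsum : 0 ≤ ∑ p ∈ P, |f p| := Finset.sum_nonneg fun _ _ => abs_nonneg _
  have hysum : 0 ≤ ∑ p ∈ P, |p.2| := Finset.sum_nonneg fun _ _ => abs_nonneg _
  have hfle : ∀ p ∈ P, |f p| ≤ ∑ p ∈ P, |f p| := fun p hp =>
    Finset.single_le_sum (f := fun p => |f p|) (fun _ _ => abs_nonneg _) hp
  have hyle : ∀ p ∈ P, |p.2| ≤ ∑ p ∈ P, |p.2| := fun p hp =>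
    Finset.single_le_sum (f := fun p : ℝ × ℝ => |p.2|) (fun _ _ => abs_nonneg _) hp
  set X := ∑ p ∈ P, |f p|
  set Y := ∑ p ∈ P, |p.2|
  set η := 1 / (16 * (X + 1)) with hη
  have hη0 : 0 < η := by positivity
  set ε := η / (20 * (X + 1)) with hε
  have hε0 : 0 < ε := by positivity
  have hτ0 : 0 < ε / (Y + 1) := by positivity
  have hτy : ∀ p ∈ P, |ε / (Y + 1) * p.2| ≤ ε := by
    intro p hp
    rw [abs_mul, abs_of_pos hτ0, div_mul_eq_mul_div, div_le_iff₀ (by positivity)]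
    exact mul_le_mul_of_nonneg_left (by linarith [hyle p hp]) hε0.le
  refine ⟨shear κ⁻¹ t (ε / (Y + 1)) (by positivity) hτ0.ne', X + 1, η, ε, by linarith, ?_, hε0.le,
    ?_, ?_, ?_, ?_, ?_, ?_, ?_⟩
  · rw [hη]
    field_simp
  · apply le_of_eq
    rw [hε]
    field_simp
  · intro p hp
    obtain ⟨q, hq, rfl⟩ := Finset.mem_image.1 hp
    have := (abs_le.1 (hfle q hq)).1
    rw [shear_apply]
    simp only [hf] at this ⊢
    linarith
  · intro p hp
    obtain ⟨q, hq, rfl⟩ := Finset.mem_image.1 hp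
    have := (abs_le.1 (hfle q hq)).2
    rw [shear_apply]
    simp only [hf] at this ⊢
    linarith
  · intro p hp
    obtain ⟨q, hq, rfl⟩ := Finset.mem_image.1 hp
    rw [shear_apply]
    exact (abs_le.1 (hτy q hq)).1
  · intro p hp
    obtain ⟨q, hq, rfl⟩ := Finset.mem_image.1 hp
    rw [shear_apply]
    exact (abs_le.1 (hτy q hq)).2
  · intro p' hp' q' hq' hpq
    obtain ⟨p, hp, rfl⟩ := Finset.mem_image.1 hp'
    obtain ⟨q, hq, rfl⟩ := Finset.mem_image.1 hq'
    have hne : p ≠ q := fun h => hpq (by rw [h])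
    have h1 := hκP (p, q) (Finset.mk_mem_product hp hq) (ht' p hp q hq hne)
    simp only [shear_apply]
    rw [← mul_sub, abs_mul, abs_of_pos (inv_pos.2 hκ), le_inv_mul_iff₀ hκ, mul_one]
    exact h1.le
  · intro p' hp' q' hq' r' hr' hpq hpr hqr
    obtain ⟨p, hp, rfl⟩ := Finset.mem_image.1 hp'
    obtain ⟨q, hq, rfl⟩ := Finset.mem_image.1 hq'
    obtain ⟨r, hr, rfl⟩ := Finset.mem_image.1 hr'
    rw [cross_shear]
    refine mul_ne_zero (by positivity) fun h0 => ?_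
    exact hgp p hp q hq r hr (fun h => hpq (by rw [h])) (fun h => hpr (by rw [h]))
      (fun h => hqr (by rw [h])) (collinear_of_cross_eq_zero h0)

/-- Every `k`-colored point set in the plane in general position admits a perfect
rainbow polygon of size at most `⌈7k/5⌉ + 6`: a simple polygon whose closed region
contains exactly one point of each color. In particular `ρ(k) ≤ ⌈7k/5⌉ + 6`. -/
theorem perfect_rainbow_polygon (k : ℕ) (P : Finset (ℝ × ℝ))
    (hgp : ∀ p ∈ P, ∀ q ∈ P, ∀ r ∈ P, p ≠ q → p ≠ r → q ≠ r →
      ¬ Collinear ℝ ({p, q, r} : Set (ℝ × ℝ)))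
    (c : ℝ × ℝ → Fin k) (hc : ∀ j : Fin k, ∃ p ∈ P, c p = j) :
    ∃ (m : ℕ) (w : Fin (m + 1) → ℝ × ℝ),
      IsSimplePolygon w ∧
      m + 1 ≤ ⌈(7 * (k : ℚ)) / 5⌉₊ + 6 ∧
      ∀ j : Fin k, ∃! p : ℝ × ℝ, p ∈ P ∧ c p = j ∧ p ∈ polyRegion w := by
  choose g hgP hgc using hc
  obtain ⟨e, N, η, ε, hP⟩ := exists_normalization P hgp
  set S := Finset.univ.image fun j => e (g j) with hS
  have hinj : Function.Injective fun j => e (g j) := by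
    intro i j hij
    have := e.injective hij
    rw [← hgc i, ← hgc j, this]
  have hSc : S.card = k := by
    rw [hS, Finset.card_image_of_injective _ hinj, Finset.card_univ, Fintype.card_fin]
  have hSP : S ⊆ P.image e := by
    intro p hp
    obtain ⟨j, -, rfl⟩ := Finset.mem_image.1 hp
    exact Finset.mem_image_of_mem _ (hgP j)
  obtain ⟨m, v, u, w, h, hm⟩ := (Sweep.start hP).run hP k hSc hSP (fun q hq => by
    have := hP.x_le q (hSP hq)
    constructor <;> linarith)
  rw [Finset.union_empty] at h
  have hreg : ∀ p, p ∈ polyRegion (fun i => e.symm (w i)) ↔ e p ∈ polyRegion w := by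
    intro p
    rw [← mem_polyRegion_map w e.symm, e.symm_apply_apply]
  refine ⟨m, fun i => e.symm (w i), h.simple.map e.symm, ?_, fun j => ⟨g j, ?_, ?_⟩⟩
  · have h1 : (7 * (k : ℚ)) / 5 ≤ (⌈(7 * (k : ℚ)) / 5⌉₊ : ℕ) := Nat.le_ceil _
    rw [div_le_iff₀ (by norm_num)] at h1
    have h2 : 7 * k ≤ ⌈(7 * (k : ℚ)) / 5⌉₊ * 5 := by exact_mod_cast h1
    omega
  · refine ⟨hgP j, hgc j, ?_⟩
    rw [hreg]
    exact Or.inl (h.mem _ (Finset.mem_image_of_mem _ (Finset.mem_univ j)))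
  · rintro p ⟨hp, hpj, hpr⟩
    rw [hreg] at hpr
    obtain ⟨i, -, hi⟩ := Finset.mem_image.1 (h.only _ (Finset.mem_image_of_mem _ hp) hpr)
    have hgp' := e.injective hi
    rw [← hpj, ← hgp', hgc]
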